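/- Let (L, Q) be an L∞-algebra with cohomology H = H(L, Q₁), and let f : H → L be a quasi-isomorphism of complexes (where H has zero differential). Then there exists an L∞-algebra structure \tilde Q on H with \tilde Q₁ = 0 and \tilde Q₂ equal to the bracket induced by Q₂ on cohomology, together with an L∞-quasi-isomorphism F from (H, \tilde Q) to (L, Q) whose first structure map F₁ equals f. -/

import Mathlib

open scoped TensorProduct
noncomputable section

/-- The Koszul sign of a permutation `θ` acting on homogeneous elements of degrees `d`. -/
def koszulSign (K : Type) [Field K] {n : ℕ} (d : Fin n → ℤ) (θ : Equiv.Perm (Fin n)) : K :=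
  ∏ p ∈ Finset.univ.filter (fun p : Fin n × Fin n => p.1 < p.2 ∧ θ p.2 < θ p.1),
    (-1:K) ^ (d (θ p.1) * d (θ p.2))

/-- Data of the cofree cocommutative coalgebra `F(Σ⁻¹V) = ⊕_{n≥1} Sⁿ(Σ⁻¹V)` cogenerated by a
graded vector space `V` (with grading `grV`):
* `C` is the underlying space, with comultiplication `comul` (the deshuffle coproduct),
* `word n v` is the product `v₀·…·v_n ∈ S^{n+1}(Σ⁻¹V) ⊆ C` of cogenerators,
* `wt n` is the `n`-th symmetric power `S^{n+1}(Σ⁻¹V)` and `grC` the internal (suspended)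
  degree grading,
* `xi` is the projection `C → V` onto the cogenerators,
* `par m` is the parity operator acting by `(−1)^{m·i}` on `grC i` (used to express the
  Koszul sign rule for tensor products of graded maps). -/
structure CofreeData (K : Type) [Field K] (V : Type) [AddCommGroup V] [Module K V]
    (grV : ℤ → Submodule K V) : Type 1 where
  C : Type
  [acg : AddCommGroup C]
  [mod : Module K C]
  comul : C →ₗ[K] (TensorProduct K C C)
  word : ∀ n : ℕ, MultilinearMap K (fun _ : Fin (n+1) => V) C
  grC : ℤ → Submodule K C
  wt : ℕ → Submodule K C
  xi : C →ₗ[K] V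
  par : ℤ → C →ₗ[K] C
  grC_internal : DirectSum.IsInternal grC
  wt_internal : DirectSum.IsInternal wt
  word_wt : ∀ (n : ℕ) (v : Fin (n+1) → V), word n v ∈ wt n
  word_grC : ∀ (n : ℕ) (d : Fin (n+1) → ℤ) (v : Fin (n+1) → V),
    (∀ i, v i ∈ grV (d i)) → word n v ∈ grC (∑ i, (d i - 1))
  word_symm : ∀ (n : ℕ) (d : Fin (n+1) → ℤ) (v : Fin (n+1) → V),
    (∀ i, v i ∈ grV (d i)) → ∀ θ : Equiv.Perm (Fin (n+1)),
      word n (fun i => v (θ i)) = koszulSign K (fun i => d i - 1) θ • word n v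
  xi_word₀ : ∀ v : V, xi (word 0 (fun _ => v)) = v
  xi_word : ∀ (n : ℕ) (v : Fin (n+2) → V), xi (word (n+1) v) = 0
  par_apply : ∀ (m i : ℤ), ∀ x ∈ grC i, par m x = ((-1:K)^(m*i)) • x
  word_span : ∀ n : ℕ, wt n ≤ Submodule.span K (Set.range (word n))
  /-- universal property of the symmetric powers: any multilinear map with the same graded
  symmetry factors (necessarily uniquely) through `word n`. -/
  word_factor : ∀ (n : ℕ) (W : Type) (_ : AddCommGroup W) (_ : Module K W)
    (φ : MultilinearMap K (fun _ : Fin (n+1) => V) W),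
    (∀ (d : Fin (n+1) → ℤ) (v : Fin (n+1) → V), (∀ i, v i ∈ grV (d i)) →
      ∀ θ : Equiv.Perm (Fin (n+1)),
        φ (fun i => v (θ i)) = koszulSign K (fun i => d i - 1) θ • φ v) →
    ∃ gmap : C →ₗ[K] W, ∀ v, gmap (word n v) = φ v
  /-- the deshuffle formula for the comultiplication on words. -/
  comul_word₀ : ∀ v : V, comul (word 0 (fun _ => v)) = 0
  comul_word : ∀ (n : ℕ) (d : Fin (n+2) → ℤ) (v : Fin (n+2) → V),
    (∀ i, v i ∈ grV (d i)) →
    comul (word (n+1) v)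
      = ∑ k : Fin (n+1), ∑ θ : Equiv.Perm (Fin (n+2)),
          (koszulSign K (fun i => d i - 1) θ *
            ((((n+1-(k:ℕ)).factorial * ((k:ℕ)+1).factorial : ℕ) : K))⁻¹) •
          ((word (k:ℕ) (fun i : Fin ((k:ℕ)+1) => v (θ (Fin.castLE (by have := k.isLt; omega) i)))) ⊗ₜ[K]
           (word (n-(k:ℕ)) (fun j : Fin (n-(k:ℕ)+1) => v (θ (⟨(k:ℕ)+1+(j:ℕ), by have := k.isLt; have := j.isLt; omega⟩ : Fin (n+2))))))

attribute [instance] CofreeData.acg CofreeData.mod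

variable {K : Type} [Field K] {V : Type} [AddCommGroup V] [Module K V]
  {grV : ℤ → Submodule K V}

/-- A coderivation of degree `m` of the coalgebra `C = F(Σ⁻¹V)`:
`Δ ∘ d = (d ⊗ I + I ⊗ d) ∘ Δ`, where `I ⊗ d` carries the Koszul sign
(implemented by the parity operator `par m`). -/
def CofreeData.IsCoderivation (F : CofreeData K V grV) (m : ℤ) (dmap : F.C →ₗ[K] F.C) :
    Prop :=
  (∀ i : ℤ, ∀ x ∈ F.grC i, dmap x ∈ F.grC (i+m)) ∧
  F.comul ∘ₗ dmap
    = (TensorProduct.map dmap LinearMap.id + TensorProduct.map (F.par m) dmap) ∘ₗ F.comul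

/-- A morphism of the cofree coalgebras `F(Σ⁻¹V) → F(Σ⁻¹V')` (degree-0 coalgebra
homomorphism): `Δ' ∘ Φ = (Φ ⊗ Φ) ∘ Δ`. -/
def CofreeData.IsMorphism {K : Type} [Field K]
    {V : Type} [AddCommGroup V] [Module K V] {grV : ℤ → Submodule K V}
    {V' : Type} [AddCommGroup V'] [Module K V'] {grV' : ℤ → Submodule K V'}
    (F : CofreeData K V grV) (F' : CofreeData K V' grV') (Φ : F.C →ₗ[K] F'.C) : Prop :=
  (∀ i : ℤ, ∀ x ∈ F.grC i, Φ x ∈ F'.grC i) ∧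
  F'.comul ∘ₗ Φ = (TensorProduct.map Φ Φ) ∘ₗ F.comul

/-- The structure maps `F_n : Sⁿ(Σ⁻¹V) → Σ⁻¹V'` of a coalgebra morphism. -/
def CofreeData.structMap {K : Type} [Field K]
    {V : Type} [AddCommGroup V] [Module K V] {grV : ℤ → Submodule K V}
    {V' : Type} [AddCommGroup V'] [Module K V'] {grV' : ℤ → Submodule K V'}
    (F : CofreeData K V grV) (F' : CofreeData K V' grV') (Φ : F.C →ₗ[K] F'.C)
    (n : ℕ) (v : Fin (n+1) → V) : V' :=
  F'.xi (Φ (F.word n v))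

/-- The coderivation `Q` encodes the DGLA structure `(d, [·,·])`, i.e. `Q₁ = d`,
`Q₂(h₁,h₂) = (−1)^{|h₁|}[h₁,h₂]` and `Q_n = 0` for `n > 2`. -/
def CofreeData.EncodesDGLA {K : Type} [Field K]
    {L : Type} [AddCommGroup L] [Module K L] {grL : ℤ → Submodule K L}
    (F : CofreeData K L grL) (dL : L →ₗ[K] L) (br : L →ₗ[K] L →ₗ[K] L)
    (Q : F.C →ₗ[K] F.C) : Prop :=
  F.IsCoderivation 1 Q ∧
  (∀ v : L, F.xi (Q (F.word 0 (fun _ => v))) = dL v) ∧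
  (∀ i : ℤ, ∀ v₁ ∈ grL i, ∀ v₂ : L,
    F.xi (Q (F.word 1 ![v₁, v₂])) = ((-1:K)^i) • br v₁ v₂) ∧
  (∀ (n : ℕ) (v : Fin (n+3) → L), F.xi (Q (F.word (n+2) v)) = 0)

/-!
Write `Q = Q₁ + Q₂ + ⋯` for the structure maps of the coderivation and split the complex `(L, Q₁)`
along `f`: there are a projection `p : L → H` and a homotopy `h` with `Q₁ h + h Q₁ = 1 - f p`. The
transferred morphism is the solution of `ξ Φ = f ξ - h (Q₂ + Q₃ + ⋯) Φ`, where `ξ` is the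
corestriction to cogenerators, and the transferred structure is the coderivation with
`ξ Q̃ = p (Q₂ + Q₃ + ⋯) Φ`.

The equation for `Φ` is solved by recursion on the word length. The usual sum over set partitions
is avoided by means of the Euler coderivation `E`, which multiplies words of length `n` by `n`:
`Φ E` is a coderivation along `Φ`, so it is determined by `ξ Φ E`, and `E` is invertible in
characteristic zero. All identities between maps of coalgebras then follow from the fact that the
kernel of the comultiplication is the space of cogenerators: by induction on the word length, the
defect of such an identity takes values in this kernel, so only its image under `ξ` has to be
computed.
-/

/-! ### Koszul signs -/

theorem prod_lt_comp_perm {n : ℕ} {M : Type*} [CommMonoid M] (σ : Equiv.Perm (Fin n))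
    (g : Fin n → Fin n → M) (hg : ∀ a b, g a b = g b a) :
    ∏ p : Fin n × Fin n with p.1 < p.2, g (σ p.1) (σ p.2)
      = ∏ p : Fin n × Fin n with p.1 < p.2, g p.1 p.2 := by
  refine Finset.prod_bij (fun p _ => (min (σ p.1) (σ p.2), max (σ p.1) (σ p.2))) ?_ ?_ ?_ ?_
  · intro p hp
    simpa using fun h => (Finset.mem_filter.1 hp).2.ne' h
  · rintro ⟨a, b⟩ hab ⟨a', b'⟩ hab' h
    simp only [Finset.mem_filter, Finset.mem_univ, true_and, Prod.mk.injEq] at hab hab' h ⊢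
    rcases le_total (σ a) (σ b) with h1 | h1 <;> rcases le_total (σ a') (σ b') with h2 | h2 <;>
      simp only [h1, h2, min_eq_left, min_eq_right, max_eq_left, max_eq_right,
        EmbeddingLike.apply_eq_iff_eq] at h
    · exact h
    · omega
    · omega
    · exact h.symm
  · rintro ⟨a, b⟩ hab
    simp only [Finset.mem_filter, Finset.mem_univ, true_and] at hab
    rcases lt_or_gt_of_ne (σ.symm.injective.ne hab.ne) with h | h
    · exact ⟨(σ.symm a, σ.symm b), by simpa using h, by simp [hab.le]⟩
    · exact ⟨(σ.symm b, σ.symm a), by simpa using h, by simp [hab.le]⟩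
  · intro p _
    rcases le_total (σ p.1) (σ p.2) with h | h
    · simp [h]
    · simp [h, hg (σ p.1)]

section koszulSign

theorem neg_one_zpow_mul_self (m : ℤ) : (-1 : K) ^ m * (-1 : K) ^ m = 1 := by
  rw [← mul_zpow, neg_one_mul, neg_neg, one_zpow]

theorem koszulSign_mul_self {n : ℕ} (d : Fin n → ℤ) (θ : Equiv.Perm (Fin n)) :
    koszulSign K d θ * koszulSign K d θ = 1 := by
  rw [koszulSign, ← Finset.prod_mul_distrib]
  exact Finset.prod_eq_one fun p _ => neg_one_zpow_mul_self _

theorem koszulSign_eq_prod_ite {n : ℕ} (d : Fin n → ℤ) (θ : Equiv.Perm (Fin n)) :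
    koszulSign K d θ = ∏ p : Fin n × Fin n with p.1 < p.2,
      if θ p.2 < θ p.1 then (-1 : K) ^ (d (θ p.1) * d (θ p.2)) else 1 := by
  rw [koszulSign, ← Finset.prod_filter, Finset.filter_filter]

theorem koszulSign_mul {n : ℕ} (d : Fin n → ℤ) (θ σ : Equiv.Perm (Fin n)) :
    koszulSign K d (θ * σ) = koszulSign K d θ * koszulSign K (fun i => d (θ i)) σ := by
  let inv (a b : Fin n) : K :=
    if a < b ∧ θ b < θ a ∨ b < a ∧ θ a < θ b then (-1) ^ (d (θ a) * d (θ b)) else 1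
  have hθ : koszulSign K d θ = ∏ p : Fin n × Fin n with p.1 < p.2, inv p.1 p.2 := by
    rw [koszulSign_eq_prod_ite]
    refine Finset.prod_congr rfl fun p hp => ?_
    have hp : p.1 < p.2 := by simpa using hp
    simp [inv, hp, hp.not_gt]
  rw [hθ, ← prod_lt_comp_perm σ inv fun a b => by simp only [inv, mul_comm (d (θ a)), or_comm],
    koszulSign_eq_prod_ite, koszulSign_eq_prod_ite, ← Finset.prod_mul_distrib]
  refine Finset.prod_congr rfl fun p hp => ?_
  have hσ : σ p.1 ≠ σ p.2 := σ.injective.ne (Finset.mem_filter.1 hp).2.ne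
  have hsq := neg_one_zpow_mul_self (K := K) (d (θ (σ p.1)) * d (θ (σ p.2)))
  rcases lt_or_gt_of_ne hσ with h | h <;>
    rcases lt_or_gt_of_ne (θ.injective.ne hσ) with h' | h' <;>
    simp [inv, h, h', h.not_gt, h'.not_gt, hsq]

theorem koszulSign_of_ordConnected {a n : ℕ} (d : Fin n → ℤ) (e : Fin a ↪o Fin n)
    (he : (Set.range e).OrdConnected) {β : Equiv.Perm (Fin a)} {β' : Equiv.Perm (Fin n)}
    (hβ : ∀ i, β' (e i) = e (β i)) (hβ' : ∀ x ∉ Set.range e, β' x = x) :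
    koszulSign K d β' = koszulSign K (fun i => d (e i)) β := by
  have hmaps : ∀ x ∈ Set.range e, β' x ∈ Set.range e := by
    rintro _ ⟨i, rfl⟩
    exact ⟨β i, (hβ i).symm⟩
  symm
  rw [koszulSign, koszulSign]
  refine Finset.prod_bij (fun p _ => (e p.1, e p.2)) ?_ ?_ ?_ ?_
  · intro p hp
    simpa [hβ] using hp
  · intro p _ q _ h
    simpa [Prod.ext_iff] using h
  · rintro ⟨x, y⟩ h
    simp only [Finset.mem_filter, Finset.mem_univ, true_and] at h
    obtain ⟨hxy, hyx⟩ := h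
    have hx : x ∈ Set.range e := by
      by_contra hx
      rw [hβ' x hx] at hyx
      by_cases hy : y ∈ Set.range e
      · exact hx (he.out (hmaps y hy) hy ⟨hyx.le, hxy.le⟩)
      · exact hxy.not_gt (hβ' y hy ▸ hyx)
    have hy : y ∈ Set.range e := by
      by_contra hy
      rw [hβ' y hy] at hyx
      exact hy (he.out hx (hmaps x hx) ⟨hxy.le, hyx.le⟩)
    obtain ⟨i, rfl⟩ := hx
    obtain ⟨j, rfl⟩ := hy
    rw [hβ, hβ, e.lt_iff_lt] at hyx
    exact ⟨(i, j), by simpa [hβ] using ⟨e.lt_iff_lt.1 hxy, hyx⟩, rfl⟩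
  · intro p _
    simp [hβ]

theorem koszulSign_decomposeFin_zero {n : ℕ} (d : Fin (n + 1) → ℤ) (σ : Equiv.Perm (Fin n)) :
    koszulSign K d (Equiv.Perm.decomposeFin.symm (0, σ))
      = koszulSign K (fun i => d i.succ) σ := by
  refine koszulSign_of_ordConnected d (Fin.succOrderEmb n) ⟨?_⟩ (fun i => by simp) fun x hx => ?_
  · rintro _ ⟨i, rfl⟩ _ - x hx
    have hx0 : x ≠ 0 := ((Fin.succ_pos i).trans_le hx.1).ne'
    exact ⟨x.pred hx0, Fin.succ_pred x hx0⟩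
  · obtain rfl | ⟨i, rfl⟩ := Fin.eq_zero_or_eq_succ x
    · simp
    · exact absurd ⟨i, rfl⟩ hx

theorem cycleRange_lt_cycleRange_iff {n : ℕ} (j : Fin (n + 1)) {x y : Fin (n + 1)} (hxy : x < y) :
    j.cycleRange y < j.cycleRange x ↔ y = j := by
  refine ⟨fun h => ?_, ?_⟩
  · by_contra hy
    obtain ⟨y, rfl⟩ := Fin.exists_succAbove_eq hy
    obtain rfl | ⟨x, rfl⟩ := Fin.eq_self_or_eq_succAbove j x
    · simp at h
    · simp only [Fin.cycleRange_succAbove, Fin.succ_lt_succ_iff] at h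
      exact h.not_gt (Fin.succAbove_lt_succAbove_iff.1 hxy)
  · rintro rfl
    rw [Fin.cycleRange_self, Fin.pos_iff_ne_zero, ← Fin.cycleRange_self y]
    exact (Equiv.injective _).ne hxy.ne

theorem koszulSign_cycleRange {n : ℕ} (d : Fin (n + 1) → ℤ) (j : Fin (n + 1)) :
    koszulSign K d j.cycleRange = (-1 : K) ^ (d 0 * ∑ i with i < j, d (j.cycleRange i)) := by
  have hinv : Finset.univ.filter (fun p : Fin (n + 1) × Fin (n + 1) =>
      p.1 < p.2 ∧ j.cycleRange p.2 < j.cycleRange p.1)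
      = (Finset.univ.filter (· < j)).image fun i => (i, j) := by
    ext ⟨x, y⟩
    simp only [Finset.mem_filter, Finset.mem_univ, true_and, Finset.mem_image, Prod.mk.injEq]
    constructor
    · rintro ⟨hxy, h⟩
      obtain rfl := (cycleRange_lt_cycleRange_iff j hxy).1 h
      exact ⟨x, hxy, rfl, rfl⟩
    · rintro ⟨i, hi, rfl, rfl⟩
      exact ⟨hi, (cycleRange_lt_cycleRange_iff _ hi).2 rfl⟩
  have hsum (s : Finset (Fin (n + 1))) (g : Fin (n + 1) → ℤ) :
      (-1 : K) ^ ∑ i ∈ s, g i = ∏ i ∈ s, (-1 : K) ^ g i := by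
    induction s using Finset.induction_on with
    | empty => simp
    | insert a s ha ih => rw [Finset.sum_insert ha, Finset.prod_insert ha, zpow_add₀ (by simp), ih]
  rw [koszulSign, hinv, Finset.prod_image fun _ _ _ _ h => (Prod.mk.inj h).1, Finset.mul_sum, hsum]
  simp only [Fin.cycleRange_self, mul_comm]

end koszulSign

theorem sum_perm_fin_succ {n : ℕ} {M : Type*} [AddCommMonoid M]
    (c : Fin (n + 1) → Equiv.Perm (Fin (n + 1))) (hc : ∀ j, c j j = 0)
    (g : Equiv.Perm (Fin (n + 1)) → M) :
    ∑ θ, g θ = ∑ j, ∑ σ, g (Equiv.Perm.decomposeFin.symm (0, σ) * c j) := by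
  rw [← Fintype.sum_prod_type']
  symm
  refine Function.Bijective.sum_comp (g := g)
    (e := fun p : Fin (n + 1) × Equiv.Perm (Fin n) =>
      Equiv.Perm.decomposeFin.symm (0, p.2) * c p.1) ?_
  rw [Fintype.bijective_iff_injective_and_card]
  refine ⟨?_, by simp [Fintype.card_perm, Nat.factorial_succ]⟩
  have hzero (j) (σ : Equiv.Perm (Fin n)) :
      (Equiv.Perm.decomposeFin.symm (0, σ) * c j)⁻¹ 0 = j := by
    rw [Equiv.Perm.inv_eq_iff_eq, Equiv.Perm.mul_apply, hc, Equiv.Perm.decomposeFin_symm_apply_zero]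
  rintro ⟨j, σ⟩ ⟨j', σ'⟩ h
  obtain rfl : j = j' := by rw [← hzero j σ, ← hzero j' σ']; exact congrArg (fun θ => θ⁻¹ 0) h
  have hσ := Equiv.Perm.decomposeFin.symm.injective (mul_right_cancel h)
  exact congrArg (Prod.mk j) (Prod.mk.inj hσ).2

/-! ### Linear maps on graded spaces -/

section Graded
variable {ι M W : Type*} [AddCommGroup M] [Module K M] [AddCommGroup W] [Module K W]
  {A : ι → Submodule K M}

theorem linearMap_ext_of_iSup_eq_top (hA : ⨆ i, A i = ⊤) {f g : M →ₗ[K] W}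
    (h : ∀ i, ∀ x ∈ A i, f x = g x) : f = g :=
  LinearMap.eqLocus_eq_top.1 <| top_unique <| hA ▸ iSup_le h

variable [DecidableEq ι]

/-- The linear map out of an internal direct sum `M = ⨁ i, A i` that is equal to `g i` on `A i`. -/
def ofComponents (hA : DirectSum.IsInternal A) (g : ι → M →ₗ[K] W) : M →ₗ[K] W :=
  DirectSum.toModule K ι W (fun i => g i ∘ₗ (A i).subtype) ∘ₗ
    (LinearEquiv.ofBijective (DirectSum.coeLinearMap A) hA).symm.toLinearMap

theorem ofComponents_apply (hA : DirectSum.IsInternal A) (g : ι → M →ₗ[K] W) {i : ι} {x : M}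
    (hx : x ∈ A i) : ofComponents hA g x = g i x := by
  have : (LinearEquiv.ofBijective (DirectSum.coeLinearMap A) hA).symm x
      = DirectSum.lof K ι (fun i => A i) i ⟨x, hx⟩ := by
    rw [LinearEquiv.symm_apply_eq]
    exact (DirectSum.coeLinearMap_lof (A := A) i (⟨x, hx⟩ : A i)).symm
  rw [ofComponents, LinearMap.comp_apply, LinearEquiv.coe_coe, this, DirectSum.toModule_lof,
    LinearMap.comp_apply, Submodule.subtype_apply]

/-- The projection of an internal direct sum `M = ⨁ i, A i` onto the summand `A i`, as an
endomorphism of `M`. -/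
def component (hA : DirectSum.IsInternal A) (i : ι) : M →ₗ[K] M :=
  (A i).subtype ∘ₗ DirectSum.component K ι (fun i => A i) i ∘ₗ
    (LinearEquiv.ofBijective (DirectSum.coeLinearMap A) hA).symm.toLinearMap

theorem component_mem (hA : DirectSum.IsInternal A) (i : ι) (x : M) : component hA i x ∈ A i :=
  Subtype.prop _

theorem component_of_mem (hA : DirectSum.IsInternal A) {i : ι} {x : M} (hx : x ∈ A i) :
    component hA i x = x :=
  congrArg Subtype.val (hA.ofBijective_coeLinearMap_of_mem hx)

theorem component_of_mem_ne (hA : DirectSum.IsInternal A) {i j : ι} (hij : i ≠ j) {x : M}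
    (hx : x ∈ A i) : component hA j x = 0 :=
  congrArg Subtype.val (hA.ofBijective_coeLinearMap_of_mem_ne hij hx)

theorem eq_of_le_of_iSup_eq_top (hA : DirectSum.IsInternal A) {B : ι → Submodule K M}
    (hB : ∀ i, B i ≤ A i) (htop : ⨆ i, B i = ⊤) (i : ι) : A i = B i := by
  refine le_antisymm (fun x hx => ?_) (hB i)
  have hcomap : ⨆ j, B j ≤ (B i).comap (component hA i) := by
    refine iSup_le fun j y hy => ?_
    rw [Submodule.mem_comap]
    obtain rfl | hji := eq_or_ne j i
    · rwa [component_of_mem hA (hB j hy)]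
    · rw [component_of_mem_ne hA hji (hB j hy)]
      exact zero_mem _
  rw [← component_of_mem hA hx]
  exact hcomap (htop ▸ Submodule.mem_top)

end Graded

theorem forall_fin_cons_mem {n : ℕ} {d : Fin n → ℤ} {v : Fin n → V} {i : ℤ} {u : V}
    (hu : u ∈ grV (i + 1)) (hv : ∀ j, v j ∈ grV (d j + 1)) (j : Fin (n + 1)) :
    (Fin.cons u v : Fin (n + 1) → V) j ∈ grV ((Fin.cons i d : Fin (n + 1) → ℤ) j + 1) := by
  cases j using Fin.cases with
  | zero => exact hu
  | succ j => exact hv j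

theorem multilinearMap_ext_of_homogeneous {n : ℕ} {W : Type*} [AddCommGroup W] [Module K W]
    (hV : ⨆ i, grV i = ⊤) {φ ψ : MultilinearMap K (fun _ : Fin n => V) W}
    (h : ∀ (d : Fin n → ℤ) (v : Fin n → V), (∀ i, v i ∈ grV (d i + 1)) → φ v = ψ v) : φ = ψ := by
  induction n with
  | zero => exact MultilinearMap.ext fun v => h (fun i => i.elim0) v (fun i => i.elim0)
  | succ n ih =>
    suffices φ.curryLeft = ψ.curryLeft by
      rw [← φ.uncurry_curryLeft, this, ψ.uncurry_curryLeft]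
    refine linearMap_ext_of_iSup_eq_top hV fun i x hx => ih fun d v hv => ?_
    exact h (Fin.cons (i - 1) d) (Fin.cons x v)
      (forall_fin_cons_mem (by rwa [sub_add_cancel]) hv)

/-! ### Words in the cofree coalgebra -/

namespace CofreeData

variable {F : CofreeData K V grV}

/-- The inclusion of the cogenerators as words of length one. -/
def incl (F : CofreeData K V grV) : V →ₗ[K] F.C :=
  (MultilinearMap.ofSubsingleton K V F.C (0 : Fin 1)).symm (F.word 0)

theorem incl_apply (F : CofreeData K V grV) (v : V) : F.incl v = F.word 0 (fun _ => v) := rfl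

theorem word_zero (v : Fin 1 → V) : F.word 0 v = F.incl (v 0) := by
  rw [incl_apply]
  congr 1
  funext i
  fin_cases i
  rfl

theorem xi_incl (v : V) : F.xi (F.incl v) = v := F.xi_word₀ v

theorem comul_incl (v : V) : F.comul (F.incl v) = 0 := F.comul_word₀ v

theorem word_comp_perm {n : ℕ} {d : Fin (n + 1) → ℤ} {v : Fin (n + 1) → V}
    (hv : ∀ i, v i ∈ grV (d i + 1)) (θ : Equiv.Perm (Fin (n + 1))) :
    F.word n (fun i => v (θ i)) = koszulSign K d θ • F.word n v := by
  simpa only [add_sub_cancel_right] using F.word_symm n _ v hv θ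

theorem wt_eq_span (n : ℕ) : F.wt n = Submodule.span K (Set.range (F.word n)) :=
  le_antisymm (F.word_span n) (Submodule.span_le.2 (Set.range_subset_iff.2 (F.word_wt n)))

theorem wt_le {n : ℕ} {S : Submodule K F.C} (h : ∀ v, F.word n v ∈ S) : F.wt n ≤ S := by
  rw [wt_eq_span, Submodule.span_le]
  exact Set.range_subset_iff.2 h

theorem xi_of_mem_wt_succ {n : ℕ} {x : F.C} (hx : x ∈ F.wt (n + 1)) : F.xi x = 0 :=
  (wt_le (F.xi_word n) : F.wt (n + 1) ≤ LinearMap.ker F.xi) hx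

theorem incl_xi {x : F.C} (hx : x ∈ F.wt 0) : F.incl (F.xi x) = x := by
  refine (wt_le fun v => ?_ : F.wt 0 ≤ LinearMap.eqLocus (F.incl ∘ₗ F.xi) LinearMap.id) hx
  simp only [LinearMap.mem_eqLocus, LinearMap.comp_apply, LinearMap.id_apply, word_zero, xi_incl]

/-- The part of weight `n` and degree `i` of the cofree coalgebra, spanned by the words in
homogeneous letters. Degrees are suspended: a letter of `grV (i + 1)` has degree `i`. -/
def bigraded (F : CofreeData K V grV) (n : ℕ) (i : ℤ) : Submodule K F.C :=
  Submodule.span K {x | ∃ (d : Fin (n + 1) → ℤ) (v : Fin (n + 1) → V),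
    (∀ j, v j ∈ grV (d j + 1)) ∧ ∑ j, d j = i ∧ F.word n v = x}

theorem word_mem_bigraded {n : ℕ} {d : Fin (n + 1) → ℤ} {v : Fin (n + 1) → V}
    (hv : ∀ j, v j ∈ grV (d j + 1)) : F.word n v ∈ F.bigraded n (∑ j, d j) :=
  Submodule.subset_span ⟨d, v, hv, rfl, rfl⟩

theorem incl_mem_bigraded {i : ℤ} {v : V} (hv : v ∈ grV (i + 1)) : F.incl v ∈ F.bigraded 0 i :=
  Submodule.subset_span ⟨fun _ => i, fun _ => v, fun _ => hv, by simp, rfl⟩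

theorem bigraded_le {n : ℕ} {i : ℤ} {S : Submodule K F.C}
    (h : ∀ (d : Fin (n + 1) → ℤ) (v : Fin (n + 1) → V),
      (∀ j, v j ∈ grV (d j + 1)) → ∑ j, d j = i → F.word n v ∈ S) : F.bigraded n i ≤ S := by
  refine Submodule.span_le.2 ?_
  rintro _ ⟨d, v, hv, hd, rfl⟩
  exact h d v hv hd

theorem bigraded_le_grC (n : ℕ) (i : ℤ) : F.bigraded n i ≤ F.grC i := by
  refine bigraded_le fun d v hv hd => hd ▸ ?_
  simpa only [add_sub_cancel_right] using F.word_grC n _ v hv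

theorem bigraded_le_wt (n : ℕ) (i : ℤ) : F.bigraded n i ≤ F.wt n :=
  bigraded_le fun _ v _ _ => F.word_wt n v

theorem wt_eq_iSup_bigraded (hV : ⨆ i, grV i = ⊤) (n : ℕ) : F.wt n = ⨆ i, F.bigraded n i := by
  refine le_antisymm (wt_le fun v => ?_) (iSup_le (bigraded_le_wt n))
  have hmkQ : (Submodule.mkQ (⨆ i, F.bigraded n i)).compMultilinearMap (F.word n) = 0 := by
    refine multilinearMap_ext_of_homogeneous hV fun d v hv => ?_
    rw [LinearMap.compMultilinearMap_apply, Submodule.mkQ_apply, zero_apply,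
      Submodule.Quotient.mk_eq_zero]
    exact Submodule.mem_iSup_of_mem _ (word_mem_bigraded hv)
  simpa using congrArg (fun φ => φ v) hmkQ

theorem iSup_bigraded (hV : ⨆ i, grV i = ⊤) : ⨆ n, ⨆ i, F.bigraded n i = ⊤ := by
  rw [← F.wt_internal.submodule_iSup_eq_top]
  exact iSup_congr fun n => (wt_eq_iSup_bigraded hV n).symm

theorem grC_eq_iSup_bigraded (hV : ⨆ i, grV i = ⊤) (i : ℤ) :
    F.grC i = ⨆ n, F.bigraded n i :=
  eq_of_le_of_iSup_eq_top F.grC_internal (fun i => iSup_le fun n => bigraded_le_grC n i)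
    (iSup_comm.trans (iSup_bigraded hV)) i

theorem grC_le (hV : ⨆ i, grV i = ⊤) {i : ℤ} {S : Submodule K F.C}
    (h : ∀ n, F.bigraded n i ≤ S) : F.grC i ≤ S := by
  rw [grC_eq_iSup_bigraded hV]
  exact iSup_le h

theorem ext_word {W : Type*} [AddCommGroup W] [Module K W] (hV : ⨆ i, grV i = ⊤)
    {f g : F.C →ₗ[K] W}
    (h : ∀ n (d : Fin (n + 1) → ℤ) (v : Fin (n + 1) → V), (∀ j, v j ∈ grV (d j + 1)) →
      f (F.word n v) = g (F.word n v)) : f = g :=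
  LinearMap.eqLocus_eq_top.1 <| top_unique <| iSup_bigraded (F := F) hV ▸
    iSup_le fun n => iSup_le fun _ => bigraded_le fun d v hv _ => h n d v hv

theorem incl_mem_grC {i : ℤ} {v : V} (hv : v ∈ grV (i + 1)) : F.incl v ∈ F.grC i :=
  bigraded_le_grC _ _ (incl_mem_bigraded hv)

theorem xi_mem (hV : ⨆ i, grV i = ⊤) {i : ℤ} {x : F.C} (hx : x ∈ F.grC i) :
    F.xi x ∈ grV (i + 1) := by
  refine (grC_le hV fun n => bigraded_le fun d v hv hd => ?_ :
    F.grC i ≤ (grV (i + 1)).comap F.xi) hx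
  rw [Submodule.mem_comap]
  cases n with
  | zero => simpa [word_zero, xi_incl, ← hd] using hv 0
  | succ n => rw [F.xi_word]; exact zero_mem _

/-! ### The parity operators -/

theorem par_par (a b : ℤ) (x : F.C) : F.par a (F.par b x) = F.par (a + b) x := by
  suffices F.par a ∘ₗ F.par b = F.par (a + b) from LinearMap.congr_fun this x
  refine linearMap_ext_of_iSup_eq_top F.grC_internal.submodule_iSup_eq_top fun i x hx => ?_
  rw [LinearMap.comp_apply, F.par_apply b i x hx, map_smul, F.par_apply a i x hx,
    F.par_apply _ i x hx, smul_smul, ← zpow_add₀ (by simp), add_comm a, add_mul]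

theorem par_zero : F.par 0 = LinearMap.id := by
  refine linearMap_ext_of_iSup_eq_top F.grC_internal.submodule_iSup_eq_top fun i x hx => ?_
  rw [F.par_apply 0 i x hx, zero_mul, zpow_zero, one_smul, LinearMap.id_apply]

theorem par_word {n : ℕ} {d : Fin (n + 1) → ℤ} {v : Fin (n + 1) → V} (e : ℤ)
    (hv : ∀ i, v i ∈ grV (d i + 1)) :
    F.par e (F.word n v) = (-1 : K) ^ (e * ∑ i, d i) • F.word n v :=
  F.par_apply _ _ _ (bigraded_le_grC _ _ (word_mem_bigraded hv))

theorem par_mem {e i : ℤ} {x : F.C} {S : Submodule K F.C} (hx : x ∈ F.grC i) (hS : x ∈ S) :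
    F.par e x ∈ S := by
  rw [F.par_apply e i x hx]
  exact S.smul_mem _ hS

end CofreeData

/-! ### Multiplication by a cogenerator -/

theorem cons_comp_decomposeFin {n : ℕ} {α : Type*} (u : α) (w : Fin n → α)
    (σ : Equiv.Perm (Fin n)) :
    (fun i => (Fin.cons u w : Fin (n + 1) → α) (Equiv.Perm.decomposeFin.symm (0, σ) i))
      = Fin.cons u fun i => w (σ i) := by
  funext i
  cases i using Fin.cases <;> simp

namespace CofreeData

variable {F : CofreeData K V grV}

/-- The words of length `n + 2`, as a multilinear map in their last `n + 1` letters with values in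
the linear maps in the first letter. -/
def consWord (F : CofreeData K V grV) (n : ℕ) :
    MultilinearMap K (fun _ : Fin (n + 1) => V) (V →ₗ[K] F.C) where
  toFun w :=
    { toFun := fun u => F.word (n + 1) (Fin.cons u w)
      map_add' := (F.word (n + 1)).cons_add w
      map_smul' := (F.word (n + 1)).cons_smul w }
  map_update_add' {inst} w i a b := by
    obtain rfl : inst = instDecidableEqFin _ := Subsingleton.elim _ _
    ext u
    simp [Fin.cons_update]
  map_update_smul' {inst} w i c a := by
    obtain rfl : inst = instDecidableEqFin _ := Subsingleton.elim _ _
    ext u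
    simp [Fin.cons_update]

theorem consWord_apply (n : ℕ) (w : Fin (n + 1) → V) (u : V) :
    F.consWord n w u = F.word (n + 1) (Fin.cons u w) := rfl

theorem consWord_comp_perm (hV : ⨆ i, grV i = ⊤) {n : ℕ} {d : Fin (n + 1) → ℤ}
    {w : Fin (n + 1) → V} (hw : ∀ i, w i ∈ grV (d i + 1)) (θ : Equiv.Perm (Fin (n + 1))) :
    F.consWord n (fun i => w (θ i)) = koszulSign K d θ • F.consWord n w := by
  refine linearMap_ext_of_iSup_eq_top hV fun i u hu => ?_
  have hu' : u ∈ grV (i - 1 + 1) := by rwa [sub_add_cancel]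
  rw [LinearMap.smul_apply, consWord_apply, consWord_apply, ← cons_comp_decomposeFin,
    word_comp_perm (forall_fin_cons_mem hu' hw), koszulSign_decomposeFin_zero]
  simp only [Fin.cons_succ]

theorem exists_linearMap_word_eq_consWord (hV : ⨆ i, grV i = ⊤) (F : CofreeData K V grV) (n : ℕ) :
    ∃ g : F.C →ₗ[K] V →ₗ[K] F.C, ∀ w, g (F.word n w) = F.consWord n w :=
  F.word_factor n _ _ _ (F.consWord n) fun _ _ hw θ =>
    consWord_comp_perm hV (fun i => by simpa only [sub_add_cancel] using hw i) θ

/-- Left multiplication of words by cogenerators. -/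
def mul (F : CofreeData K V grV) (hV : ⨆ i, grV i = ⊤) : V →ₗ[K] F.C →ₗ[K] F.C :=
  (ofComponents F.wt_internal fun n => (exists_linearMap_word_eq_consWord hV F n).choose).flip

theorem mul_word (hV : ⨆ i, grV i = ⊤) (u : V) (n : ℕ) (w : Fin (n + 1) → V) :
    F.mul hV u (F.word n w) = F.word (n + 1) (Fin.cons u w) := by
  rw [mul, LinearMap.flip_apply, ofComponents_apply _ _ (F.word_wt n w),
    (exists_linearMap_word_eq_consWord hV F n).choose_spec, consWord_apply]

theorem mul_mem_bigraded (hV : ⨆ i, grV i = ⊤) {n : ℕ} {i j : ℤ} {u : V} {x : F.C}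
    (hu : u ∈ grV (i + 1)) (hx : x ∈ F.bigraded n j) :
    F.mul hV u x ∈ F.bigraded (n + 1) (i + j) := by
  refine (bigraded_le fun d v hv hd => ?_ :
    F.bigraded n j ≤ (F.bigraded (n + 1) (i + j)).comap (F.mul hV u)) hx
  rw [Submodule.mem_comap, mul_word, ← hd, ← Fin.sum_cons]
  exact word_mem_bigraded (forall_fin_cons_mem hu hv)

theorem mul_mem_grC (hV : ⨆ i, grV i = ⊤) {i j : ℤ} {u : V} {x : F.C} (hu : u ∈ grV (i + 1))
    (hx : x ∈ F.grC j) : F.mul hV u x ∈ F.grC (i + j) :=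
  (grC_le hV fun _ _ hx => bigraded_le_grC _ _ (mul_mem_bigraded hV hu hx) :
    F.grC j ≤ (F.grC (i + j)).comap (F.mul hV u)) hx

theorem ext_incl_mul {W : Type*} [AddCommGroup W] [Module K W] (hV : ⨆ i, grV i = ⊤)
    {f g : F.C →ₗ[K] W} (hincl : ∀ i, ∀ u ∈ grV (i + 1), f (F.incl u) = g (F.incl u))
    (hmul : ∀ i, ∀ u ∈ grV (i + 1), ∀ x, f x = g x → f (F.mul hV u x) = g (F.mul hV u x)) :
    f = g := by
  refine ext_word hV fun n => ?_
  induction n with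
  | zero =>
    intro d v hv
    rw [word_zero]
    exact hincl _ _ (hv 0)
  | succ n ih =>
    intro d v hv
    rw [← Fin.cons_self_tail v, ← mul_word hV]
    exact hmul _ _ (hv 0) _ (ih (Fin.tail d) (Fin.tail v) fun i => hv i.succ)

theorem xi_mul (hV : ⨆ i, grV i = ⊤) (u : V) (x : F.C) : F.xi (F.mul hV u x) = 0 := by
  suffices F.xi ∘ₗ F.mul hV u = 0 from LinearMap.congr_fun this x
  refine ext_word hV fun n d v _ => ?_
  rw [LinearMap.comp_apply, mul_word, F.xi_word, LinearMap.zero_apply]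

end CofreeData

/-! ### The deshuffle coproduct of a product -/

theorem koszulSign_swap_of_ordConnected {a n : ℕ} (d : Fin n → ℤ) (e : Fin a ↪o Fin n)
    (he : (Set.range e).OrdConnected) (i j : Fin a) :
    koszulSign K d (Equiv.swap (e i) (e j)) = koszulSign K (fun l => d (e l)) (Equiv.swap i j) :=
  koszulSign_of_ordConnected d e he (e.injective.swap_apply i j) fun _ hx =>
    Equiv.swap_apply_of_ne_of_ne (fun h => hx ⟨i, h.symm⟩) (fun h => hx ⟨j, h.symm⟩)

theorem sum_cons_cycleRange_lt_succ {n : ℕ} (a : ℤ) (d : Fin (n + 1) → ℤ) (k : Fin (n + 1)) :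
    ∑ i with i < k.succ, (Fin.cons a d : Fin (n + 2) → ℤ) (k.succ.cycleRange i)
      = ∑ i with i ≤ k, d i := by
  rw [Finset.sum_filter, Finset.sum_filter, Fin.sum_univ_succAbove _ k.succ]
  simp [Fin.succAbove_lt_iff_castSucc_lt]

/-- The positions of the first `k + 1` letters of a word of length `n + 2`. -/
def headEmb {n : ℕ} (k : Fin (n + 1)) : Fin ((k : ℕ) + 1) ↪o Fin (n + 2) :=
  Fin.castLEOrderEmb (by omega)

/-- The positions of the last `n - k + 1` letters of a word of length `n + 2`. -/
def tailEmb {n : ℕ} (k : Fin (n + 1)) : Fin (n - (k : ℕ) + 1) ↪o Fin (n + 2) :=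
  OrderEmbedding.ofStrictMono (fun j => ⟨(k : ℕ) + 1 + (j : ℕ), by omega⟩)
    fun _ _ h => Nat.add_lt_add_left h _

theorem range_headEmb {n : ℕ} (k : Fin (n + 1)) : Set.range (headEmb k) = Set.Iic k.castSucc := by
  ext x
  refine ⟨?_, fun hx => ⟨⟨x, Nat.lt_succ_of_le hx⟩, rfl⟩⟩
  rintro ⟨i, rfl⟩
  exact Nat.le_of_lt_succ i.isLt

theorem range_tailEmb {n : ℕ} (k : Fin (n + 1)) : Set.range (tailEmb k) = Set.Ioi k.castSucc := by
  ext x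
  have hcoe (i) : (tailEmb k i : ℕ) = k + 1 + i := rfl
  simp only [Set.mem_range, Set.mem_Ioi, Fin.lt_def, Fin.ext_iff, Fin.val_castSucc, hcoe]
  exact ⟨fun ⟨i, hi⟩ => by omega, fun hx => ⟨⟨x - (k + 1), by omega⟩, by dsimp only; omega⟩⟩

theorem headEmb_ne_tailEmb {n : ℕ} (k : Fin (n + 1)) (i : Fin ((k : ℕ) + 1))
    (j : Fin (n - (k : ℕ) + 1)) : headEmb k i ≠ tailEmb k j := by
  have hi : headEmb k i ∈ Set.Iic k.castSucc := range_headEmb k ▸ Set.mem_range_self i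
  have hj : tailEmb k j ∈ Set.Ioi k.castSucc := range_tailEmb k ▸ Set.mem_range_self j
  exact (lt_of_le_of_lt hi hj).ne

namespace CofreeData

variable {F : CofreeData K V grV}

/-- The word `w` cut after its `k`-th letter, as a tensor. -/
def cut (F : CofreeData K V grV) (n : ℕ) (k : Fin (n + 1)) (w : Fin (n + 2) → V) : F.C ⊗[K] F.C :=
  F.word k (fun i => w (headEmb k i)) ⊗ₜ[K] F.word (n - k) (fun j => w (tailEmb k j))

theorem cut_comp_swap_head {n : ℕ} {d : Fin (n + 2) → ℤ} {w : Fin (n + 2) → V}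
    (hw : ∀ i, w i ∈ grV (d i + 1)) {k : Fin (n + 1)} {i j : Fin (n + 2)} (hi : i ≤ k.castSucc)
    (hj : j ≤ k.castSucc) :
    F.cut n k (fun l => w (Equiv.swap i j l)) = koszulSign K d (Equiv.swap i j) • F.cut n k w := by
  obtain ⟨i, rfl⟩ : i ∈ Set.range (headEmb k) := by rwa [range_headEmb]
  obtain ⟨j, rfl⟩ : j ∈ Set.range (headEmb k) := by rwa [range_headEmb]
  have htail (l) : Equiv.swap (headEmb k i) (headEmb k j) (tailEmb k l) = tailEmb k l :=
    Equiv.swap_apply_of_ne_of_ne (headEmb_ne_tailEmb k i l).symm (headEmb_ne_tailEmb k j l).symm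
  rw [koszulSign_swap_of_ordConnected d (headEmb k) (range_headEmb k ▸ Set.ordConnected_Iic), cut,
    cut, TensorProduct.smul_tmul', ← word_comp_perm fun l => hw (headEmb k l)]
  simp only [(headEmb k).injective.swap_apply, htail]

theorem cut_comp_swap_tail {n : ℕ} {d : Fin (n + 2) → ℤ} {w : Fin (n + 2) → V}
    (hw : ∀ i, w i ∈ grV (d i + 1)) {k : Fin (n + 1)} {i j : Fin (n + 2)} (hi : k.castSucc < i)
    (hj : k.castSucc < j) :
    F.cut n k (fun l => w (Equiv.swap i j l)) = koszulSign K d (Equiv.swap i j) • F.cut n k w := by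
  obtain ⟨i, rfl⟩ : i ∈ Set.range (tailEmb k) := by rwa [range_tailEmb]
  obtain ⟨j, rfl⟩ : j ∈ Set.range (tailEmb k) := by rwa [range_tailEmb]
  have hhead (l) : Equiv.swap (tailEmb k i) (tailEmb k j) (headEmb k l) = headEmb k l :=
    Equiv.swap_apply_of_ne_of_ne (headEmb_ne_tailEmb k l i) (headEmb_ne_tailEmb k l j)
  rw [koszulSign_swap_of_ordConnected d (tailEmb k) (range_tailEmb k ▸ Set.ordConnected_Ioi), cut,
    cut, ← TensorProduct.tmul_smul, ← word_comp_perm fun l => hw (tailEmb k l)]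
  simp only [(tailEmb k).injective.swap_apply, hhead]

/-- The summand of the deshuffle coproduct of `word (n + 1) v` given by the permutation `θ` and by
cutting after the `k`-th letter, without its factorial denominator. -/
def signedCut (F : CofreeData K V grV) {n : ℕ} (d : Fin (n + 2) → ℤ) (v : Fin (n + 2) → V)
    (k : Fin (n + 1)) (θ : Equiv.Perm (Fin (n + 2))) : F.C ⊗[K] F.C :=
  koszulSign K d θ • F.cut n k fun i => v (θ i)

theorem signedCut_mul_of_comp {n : ℕ} {d : Fin (n + 2) → ℤ} {v : Fin (n + 2) → V}
    {k : Fin (n + 1)} {θ σ : Equiv.Perm (Fin (n + 2))}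
    (h : F.cut n k (fun i => v (θ (σ i)))
      = koszulSign K (fun i => d (θ i)) σ • F.cut n k fun i => v (θ i)) :
    F.signedCut d v k (θ * σ) = F.signedCut d v k θ := by
  simp only [signedCut, Equiv.Perm.mul_apply]
  rw [h, koszulSign_mul, smul_smul, mul_assoc, koszulSign_mul_self, mul_one]

theorem signedCut_mul_swap_head {n : ℕ} {d : Fin (n + 2) → ℤ} {v : Fin (n + 2) → V}
    (hv : ∀ i, v i ∈ grV (d i + 1)) {k : Fin (n + 1)} (θ : Equiv.Perm (Fin (n + 2)))
    {i j : Fin (n + 2)} (hi : i ≤ k.castSucc) (hj : j ≤ k.castSucc) :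
    F.signedCut d v k (θ * Equiv.swap i j) = F.signedCut d v k θ :=
  signedCut_mul_of_comp (cut_comp_swap_head (fun l => hv (θ l)) hi hj)

theorem signedCut_mul_swap_tail {n : ℕ} {d : Fin (n + 2) → ℤ} {v : Fin (n + 2) → V}
    (hv : ∀ i, v i ∈ grV (d i + 1)) {k : Fin (n + 1)} (θ : Equiv.Perm (Fin (n + 2)))
    {i j : Fin (n + 2)} (hi : k.castSucc < i) (hj : k.castSucc < j) :
    F.signedCut d v k (θ * Equiv.swap i j) = F.signedCut d v k θ :=
  signedCut_mul_of_comp (cut_comp_swap_tail (fun l => hv (θ l)) hi hj)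

theorem comul_word_eq_sum_signedCut {n : ℕ} {d : Fin (n + 2) → ℤ} {v : Fin (n + 2) → V}
    (hv : ∀ i, v i ∈ grV (d i + 1)) :
    F.comul (F.word (n + 1) v) = ∑ k : Fin (n + 1),
      (((n + 1 - (k : ℕ)).factorial * ((k : ℕ) + 1).factorial : ℕ) : K)⁻¹ •
        ∑ θ, F.signedCut d v k θ := by
  rw [F.comul_word n _ v hv]
  refine Finset.sum_congr rfl fun k _ => ?_
  rw [Finset.smul_sum]
  refine Finset.sum_congr rfl fun θ _ => ?_
  rw [signedCut, smul_smul, mul_comm]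
  simp only [add_sub_cancel_right]
  rfl

theorem signedCut_decomposeFin {n : ℕ} (a : ℤ) (d : Fin (n + 1) → ℤ) (u : V) (v : Fin (n + 1) → V)
    (k : Fin (n + 1)) (σ : Equiv.Perm (Fin (n + 1))) :
    F.signedCut (Fin.cons a d) (Fin.cons u v) k (Equiv.Perm.decomposeFin.symm (0, σ))
      = koszulSign K d σ • F.cut n k (Fin.cons u fun i => v (σ i)) := by
  rw [signedCut, koszulSign_decomposeFin_zero, cons_comp_decomposeFin]
  simp only [Fin.cons_succ]

theorem signedCut_decomposeFin_mul_cycleRange {n : ℕ} (a : ℤ) (d : Fin (n + 1) → ℤ) (u : V)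
    (v : Fin (n + 1) → V) (k : Fin (n + 1)) (σ : Equiv.Perm (Fin (n + 1))) :
    F.signedCut (Fin.cons a d) (Fin.cons u v) k
        (Equiv.Perm.decomposeFin.symm (0, σ) * k.succ.cycleRange)
      = koszulSign K d σ • (-1 : K) ^ (a * ∑ i with i ≤ k, d (σ i)) •
          F.cut n k (k.succ.insertNth u fun i => v (σ i)) := by
  have hletters : (fun i => (Fin.cons u v : Fin (n + 2) → V)
      ((Equiv.Perm.decomposeFin.symm (0, σ) * k.succ.cycleRange) i))
      = k.succ.insertNth u fun i => v (σ i) := by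
    rw [← Fin.cons_comp_cycleRange u _ k.succ, ← cons_comp_decomposeFin]
    rfl
  rw [signedCut, hletters, koszulSign_mul, koszulSign_decomposeFin_zero, mul_smul,
    cons_comp_decomposeFin, koszulSign_cycleRange, sum_cons_cycleRange_lt_succ, Fin.cons_zero]
  simp only [Fin.cons_succ]

theorem sum_signedCut_cons {n : ℕ} {a : ℤ} {d : Fin (n + 1) → ℤ} {u : V} {v : Fin (n + 1) → V}
    (hu : u ∈ grV (a + 1)) (hv : ∀ i, v i ∈ grV (d i + 1)) (k : Fin (n + 1)) :
    ∑ θ, F.signedCut (Fin.cons a d) (Fin.cons u v) k θ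
      = ((k : ℕ) + 1) • ∑ σ : Equiv.Perm (Fin (n + 1)), koszulSign K d σ •
          F.cut n k (Fin.cons u fun i => v (σ i))
        + (n + 1 - (k : ℕ)) • ∑ σ : Equiv.Perm (Fin (n + 1)), koszulSign K d σ •
          (-1 : K) ^ (a * ∑ i with i ≤ k, d (σ i)) •
            F.cut n k (k.succ.insertNth u fun i => v (σ i)) := by
  -- `θ⁻¹ 0` is the position of the letter `u`; swaps within a block move it to the block's start.
  let c (j : Fin (n + 2)) : Equiv.Perm (Fin (n + 2)) :=
    if j ≤ k.castSucc then Equiv.swap 0 j else k.succ.cycleRange * Equiv.swap k.succ j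
  have hc (j) : c j j = 0 := by
    by_cases h : j ≤ k.castSucc <;> simp [c, h]
  have hmem := forall_fin_cons_mem hu hv
  have hsum (j) : (∑ σ, F.signedCut (Fin.cons a d) (Fin.cons u v) k
        (Equiv.Perm.decomposeFin.symm (0, σ) * c j))
      = if j ≤ k.castSucc then ∑ σ : Equiv.Perm (Fin (n + 1)), koszulSign K d σ •
          F.cut n k (Fin.cons u fun i => v (σ i))
        else ∑ σ : Equiv.Perm (Fin (n + 1)), koszulSign K d σ •
          (-1 : K) ^ (a * ∑ i with i ≤ k, d (σ i)) •
            F.cut n k (k.succ.insertNth u fun i => v (σ i)) := by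
    split_ifs with h <;> refine Finset.sum_congr rfl fun σ _ => ?_ <;>
      simp only [c, h, if_true, if_false]
    · rw [signedCut_mul_swap_head hmem _ (Fin.zero_le _) h, signedCut_decomposeFin]
    · rw [← mul_assoc, signedCut_mul_swap_tail hmem _ Fin.castSucc_lt_succ (not_le.1 h),
        signedCut_decomposeFin_mul_cycleRange]
  have hcard : Finset.card {j : Fin (n + 2) | ¬ j ≤ k.castSucc} = n + 1 - k := by
    simp only [not_le, Finset.filter_lt_eq_Ioi, Fin.card_Ioi, Fin.val_castSucc]
    omega
  rw [sum_perm_fin_succ c hc]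
  simp only [hsum]
  rw [Finset.sum_ite, Finset.sum_const, Finset.sum_const, hcard, Finset.filter_ge_eq_Iic,
    Fin.card_Iic, Fin.val_castSucc]

end CofreeData

theorem insertNth_castSucc_of_lt {n : ℕ} {α : Type*} {p : Fin (n + 1)} {i : Fin n}
    (hi : i.castSucc < p) (u : α) (w : Fin n → α) :
    (p.insertNth u w : Fin (n + 1) → α) i.castSucc = w i := by
  rw [← Fin.succAbove_of_castSucc_lt p i hi, Fin.insertNth_apply_succAbove]

theorem insertNth_succ_of_le {n : ℕ} {α : Type*} {p : Fin (n + 1)} {i : Fin n}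
    (hi : p ≤ i.castSucc) (u : α) (w : Fin n → α) :
    (p.insertNth u w : Fin (n + 1) → α) i.succ = w i := by
  rw [← Fin.succAbove_of_le_castSucc p i hi, Fin.insertNth_apply_succAbove]

theorem inv_factorial_mul_succ_factorial_mul [CharZero K] (a b : ℕ) :
    ((a.factorial * (b + 1).factorial : ℕ) : K)⁻¹ * ((b + 1 : ℕ) : K)
      = ((a.factorial * b.factorial : ℕ) : K)⁻¹ := by
  have hb : ((b + 1 : ℕ) : K) ≠ 0 := Nat.cast_ne_zero.2 b.succ_ne_zero
  rw [Nat.factorial_succ, mul_left_comm, Nat.cast_mul, mul_inv, mul_right_comm,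
    inv_mul_cancel₀ hb, one_mul]

theorem inv_succ_factorial_mul_factorial_mul [CharZero K] (a b : ℕ) :
    (((a + 1).factorial * b.factorial : ℕ) : K)⁻¹ * ((a + 1 : ℕ) : K)
      = ((a.factorial * b.factorial : ℕ) : K)⁻¹ := by
  rw [mul_comm (a + 1).factorial, inv_factorial_mul_succ_factorial_mul, mul_comm b.factorial]

namespace CofreeData

variable {F : CofreeData K V grV}

theorem word_congr {m n : ℕ} (h : m = n) {v : Fin (m + 1) → V} {w : Fin (n + 1) → V}
    (hvw : ∀ (i : Fin (m + 1)) (j : Fin (n + 1)), (i : ℕ) = j → v i = w j) :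
    F.word m v = F.word n w := by
  subst h
  exact congrArg _ (funext fun i => hvw i i rfl)

theorem cut_cons_zero {n : ℕ} (u : V) (w : Fin (n + 1) → V) :
    F.cut n 0 (Fin.cons u w) = F.incl u ⊗ₜ[K] F.word n w := by
  rw [cut, incl_apply]
  congr 1
  · refine word_congr rfl fun i _ _ => ?_
    obtain rfl : i = 0 := Fin.ext (Nat.lt_one_iff.1 i.isLt)
    rfl
  · refine word_congr (Nat.sub_zero n) fun i j hij => ?_
    have htail : tailEmb (0 : Fin (n + 1)) i = j.succ :=
      Fin.ext ((Nat.add_comm _ _).trans (by simp [hij]))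
    rw [htail, Fin.cons_succ]

theorem cut_cons_succ (hV : ⨆ i, grV i = ⊤) {n : ℕ} (k : Fin (n + 1)) (u : V)
    (w : Fin (n + 2) → V) :
    F.cut (n + 1) k.succ (Fin.cons u w)
      = TensorProduct.map (F.mul hV u) LinearMap.id (F.cut n k w) := by
  rw [cut, cut, TensorProduct.map_tmul, mul_word, LinearMap.id_apply]
  congr 1
  · refine word_congr (Fin.val_succ k) fun i j hij => ?_
    obtain rfl : i = j := Fin.ext hij
    cases i using Fin.cases <;> rfl
  · refine word_congr (by simp) fun i j hij => ?_
    have htail : tailEmb k.succ i = (tailEmb k j).succ :=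
      Fin.ext ((Nat.add_right_comm _ _ _).trans (by rw [hij]; rfl))
    rw [htail, Fin.cons_succ]

theorem cut_insertNth_last {n : ℕ} (u : V) (w : Fin (n + 1) → V) :
    F.cut n (Fin.last n) ((Fin.last n).succ.insertNth u w) = F.word n w ⊗ₜ[K] F.incl u := by
  rw [cut, incl_apply]
  congr 1
  · refine word_congr (Fin.val_last n) fun i j hij => ?_
    obtain rfl : i = j := Fin.ext hij
    exact insertNth_castSucc_of_lt (Fin.castSucc_lt_last i) u w
  · refine word_congr (by simp) fun i j hij => ?_
    have htail : tailEmb (Fin.last n) i = (Fin.last n).succ :=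
      Fin.ext (Nat.add_eq_left.2 (hij.trans (Nat.lt_one_iff.1 j.isLt)))
    rw [htail, Fin.insertNth_apply_same]

theorem cut_insertNth_castSucc (hV : ⨆ i, grV i = ⊤) {n : ℕ} (k : Fin (n + 1)) (u : V)
    (w : Fin (n + 2) → V) :
    F.cut (n + 1) k.castSucc (k.castSucc.succ.insertNth u w)
      = TensorProduct.map LinearMap.id (F.mul hV u) (F.cut n k w) := by
  rw [cut, cut, TensorProduct.map_tmul, mul_word, LinearMap.id_apply]
  congr 1
  · refine word_congr rfl fun i j hij => ?_
    obtain rfl : i = j := Fin.ext hij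
    exact insertNth_castSucc_of_lt (i := headEmb k i) i.isLt u w
  · refine word_congr (Nat.succ_sub (Nat.le_of_lt_succ k.isLt)) fun i j hij => ?_
    cases j using Fin.cases with
    | zero =>
      have htail : tailEmb k.castSucc i = k.castSucc.succ := Fin.ext (congrArg (_ + ·) hij)
      rw [htail, Fin.insertNth_apply_same, Fin.cons_zero]
    | succ j =>
      have htail : tailEmb k.castSucc i = (tailEmb k j).succ := Fin.ext (congrArg (_ + ·) hij)
      rw [htail, Fin.cons_succ, insertNth_succ_of_le (Nat.le_add_right _ _)]

theorem map_par_cut {n : ℕ} {d : Fin (n + 2) → ℤ} {w : Fin (n + 2) → V} (e : ℤ)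
    (hw : ∀ i, w i ∈ grV (d i + 1)) (k : Fin (n + 1)) :
    TensorProduct.map (F.par e) LinearMap.id (F.cut n k w)
      = (-1 : K) ^ (e * ∑ i with i ≤ k.castSucc, d i) • F.cut n k w := by
  have himage : Finset.univ.filter (· ≤ k.castSucc) = Finset.univ.map (headEmb k).toEmbedding := by
    ext x
    simpa using (Set.ext_iff.1 (range_headEmb k) x).symm
  rw [himage, Finset.sum_map, cut, TensorProduct.map_tmul, par_word e fun i => hw _,
    ← TensorProduct.smul_tmul', LinearMap.id_apply]
  rfl

theorem sum_koszulSign_smul_word {n : ℕ} {d : Fin (n + 1) → ℤ} {v : Fin (n + 1) → V}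
    (hv : ∀ i, v i ∈ grV (d i + 1)) :
    ∑ σ : Equiv.Perm (Fin (n + 1)), koszulSign K d σ • F.word n (fun i => v (σ i))
      = ((n + 1).factorial : K) • F.word n v := by
  have hterm (σ : Equiv.Perm (Fin (n + 1))) :
      koszulSign K d σ • F.word n (fun i => v (σ i)) = F.word n v := by
    rw [word_comp_perm hv, smul_smul, koszulSign_mul_self, one_smul]
  simp only [hterm, Finset.sum_const, Finset.card_univ, Fintype.card_perm, Fintype.card_fin]
  rw [Nat.cast_smul_eq_nsmul]

section
variable [CharZero K]

theorem sum_cut_cons (hV : ⨆ i, grV i = ⊤) {n : ℕ} {d : Fin (n + 1) → ℤ}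
    {v : Fin (n + 1) → V} (hv : ∀ i, v i ∈ grV (d i + 1)) (u : V) :
    ∑ k : Fin (n + 1), (((n + 1 - (k : ℕ)).factorial * (k : ℕ).factorial : ℕ) : K)⁻¹ •
        ∑ σ : Equiv.Perm (Fin (n + 1)), koszulSign K d σ • F.cut n k (Fin.cons u fun i => v (σ i))
      = F.incl u ⊗ₜ[K] F.word n v
        + TensorProduct.map (F.mul hV u) LinearMap.id (F.comul (F.word n v)) := by
  rw [Fin.sum_univ_succ]
  congr 1
  · have hfac : ((n + 1).factorial : K) ≠ 0 := Nat.cast_ne_zero.2 (Nat.factorial_ne_zero _)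
    simp only [cut_cons_zero, ← TensorProduct.tmul_smul]
    rw [← TensorProduct.tmul_sum, sum_koszulSign_smul_word hv, ← TensorProduct.tmul_smul,
      smul_smul]
    simp [hfac]
  · cases n with
    | zero => simp [word_zero, comul_incl]
    | succ n =>
      rw [comul_word_eq_sum_signedCut hv, map_sum]
      refine Finset.sum_congr rfl fun k _ => ?_
      simp only [cut_cons_succ hV, signedCut, map_smul, map_sum, Fin.val_succ,
        Nat.add_sub_add_right]

theorem sum_cut_insertNth (hV : ⨆ i, grV i = ⊤) {n : ℕ} {d : Fin (n + 1) → ℤ}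
    {v : Fin (n + 1) → V} (hv : ∀ i, v i ∈ grV (d i + 1)) (u : V) (e : ℤ) :
    ∑ k : Fin (n + 1), (((n - (k : ℕ)).factorial * ((k : ℕ) + 1).factorial : ℕ) : K)⁻¹ •
        ∑ σ : Equiv.Perm (Fin (n + 1)), koszulSign K d σ •
          (-1 : K) ^ (e * ∑ i with i ≤ k, d (σ i)) •
            F.cut n k (k.succ.insertNth u fun i => v (σ i))
      = F.par e (F.word n v) ⊗ₜ[K] F.incl u
        + TensorProduct.map (F.par e) (F.mul hV u) (F.comul (F.word n v)) := by
  rw [Fin.sum_univ_castSucc, add_comm]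
  congr 1
  · have hfac : ((n + 1).factorial : K) ≠ 0 := Nat.cast_ne_zero.2 (Nat.factorial_ne_zero _)
    have hsum (σ : Equiv.Perm (Fin (n + 1))) : ∑ i with i ≤ Fin.last n, d (σ i) = ∑ i, d i := by
      rw [Finset.filter_true_of_mem fun i _ => Fin.le_last i, Equiv.sum_comp σ d]
    simp only [hsum, cut_insertNth_last, smul_comm _ ((-1 : K) ^ (e * ∑ i, d i)),
      TensorProduct.smul_tmul']
    rw [← TensorProduct.sum_tmul, ← Finset.smul_sum, sum_koszulSign_smul_word hv, par_word e hv,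
      TensorProduct.smul_tmul', smul_comm]
    simp [hfac]
  · cases n with
    | zero => simp [word_zero, comul_incl]
    | succ n =>
      rw [comul_word_eq_sum_signedCut hv, map_sum]
      refine Finset.sum_congr rfl fun k _ => ?_
      have hcut (σ : Equiv.Perm (Fin (n + 2))) :
          (-1 : K) ^ (e * ∑ i with i ≤ k.castSucc, d (σ i)) •
            F.cut (n + 1) k.castSucc (k.castSucc.succ.insertNth u fun i => v (σ i))
          = TensorProduct.map (F.par e) (F.mul hV u) (F.cut n k fun i => v (σ i)) := by
        rw [cut_insertNth_castSucc hV, ← map_smul, ← map_par_cut e fun i => hv (σ i),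
          TensorProduct.map_map, LinearMap.id_comp, LinearMap.comp_id]
      simp only [hcut, signedCut, map_smul, map_sum, Fin.val_castSucc]

theorem comul_mul (hV : ⨆ i, grV i = ⊤) {e : ℤ} {u : V} (hu : u ∈ grV (e + 1)) (x : F.C) :
    F.comul (F.mul hV u x) = F.incl u ⊗ₜ[K] x + F.par e x ⊗ₜ[K] F.incl u
      + TensorProduct.map (F.mul hV u) LinearMap.id (F.comul x)
      + TensorProduct.map (F.par e) (F.mul hV u) (F.comul x) := by
  suffices F.comul ∘ₗ F.mul hV u = TensorProduct.mk K _ _ (F.incl u)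
      + (TensorProduct.mk K _ _).flip (F.incl u) ∘ₗ F.par e
      + TensorProduct.map (F.mul hV u) LinearMap.id ∘ₗ F.comul
      + TensorProduct.map (F.par e) (F.mul hV u) ∘ₗ F.comul from LinearMap.congr_fun this x
  refine ext_word hV fun n d v hv => ?_
  have hword : F.comul (F.mul hV u (F.word n v))
      = (F.incl u ⊗ₜ[K] F.word n v
        + TensorProduct.map (F.mul hV u) LinearMap.id (F.comul (F.word n v)))
      + (F.par e (F.word n v) ⊗ₜ[K] F.incl u
        + TensorProduct.map (F.par e) (F.mul hV u) (F.comul (F.word n v))) := by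
    rw [← sum_cut_cons hV hv u, ← sum_cut_insertNth hV hv u e, mul_word,
      comul_word_eq_sum_signedCut (forall_fin_cons_mem hu hv), ← Finset.sum_add_distrib]
    refine Finset.sum_congr rfl fun k _ => ?_
    rw [sum_signedCut_cons hu hv, smul_add, ← Nat.cast_smul_eq_nsmul K, ← Nat.cast_smul_eq_nsmul K,
      smul_smul, smul_smul, inv_factorial_mul_succ_factorial_mul,
      Nat.succ_sub (Nat.le_of_lt_succ k.isLt), inv_succ_factorial_mul_factorial_mul]
  simp only [LinearMap.add_apply, LinearMap.comp_apply, TensorProduct.mk_apply,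
    LinearMap.flip_apply, hword]
  abel

end

end CofreeData

/-! ### Grading, coassociativity and cocommutativity of the comultiplication -/

namespace CofreeData

variable {F : CofreeData K V grV}

/-- The part of weight `n` and degree `i` of `C ⊗ C`, spanned by the tensors of bihomogeneous
elements. The weight `n` of a word counts its letters minus one, so weights `a` and `b` add up to
the weight `a + b + 1`. -/
def tensorBigraded (F : CofreeData K V grV) (n : ℕ) (i : ℤ) : Submodule K (F.C ⊗[K] F.C) :=
  Submodule.span K {t | ∃ (a b : ℕ) (j k : ℤ) (x y : F.C),
    x ∈ F.bigraded a j ∧ y ∈ F.bigraded b k ∧ a + b + 1 = n ∧ j + k = i ∧ x ⊗ₜ[K] y = t}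

theorem tmul_mem_tensorBigraded {a b n : ℕ} {j k i : ℤ} {x y : F.C} (hx : x ∈ F.bigraded a j)
    (hy : y ∈ F.bigraded b k) (hn : a + b + 1 = n) (hi : j + k = i) :
    x ⊗ₜ[K] y ∈ F.tensorBigraded n i :=
  Submodule.subset_span ⟨a, b, j, k, x, y, hx, hy, hn, hi, rfl⟩

theorem tensorBigraded_le {n : ℕ} {i : ℤ} {S : Submodule K (F.C ⊗[K] F.C)}
    (h : ∀ a b j k, a + b + 1 = n → j + k = i → ∀ x ∈ F.bigraded a j, ∀ y ∈ F.bigraded b k,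
      x ⊗ₜ[K] y ∈ S) : F.tensorBigraded n i ≤ S := by
  refine Submodule.span_le.2 ?_
  rintro _ ⟨a, b, j, k, x, y, hx, hy, hn, hi, rfl⟩
  exact h a b j k hn hi x hx y hy

theorem map_mem_tensorBigraded {f g : F.C →ₗ[K] F.C} {p q m n : ℕ} {r s i j : ℤ}
    (hf : ∀ a k, ∀ x ∈ F.bigraded a k, f x ∈ F.bigraded (a + p) (k + r))
    (hg : ∀ b l, ∀ y ∈ F.bigraded b l, g y ∈ F.bigraded (b + q) (l + s))
    (hn : m + p + q = n) (hj : i + r + s = j) {t : F.C ⊗[K] F.C}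
    (ht : t ∈ F.tensorBigraded m i) : TensorProduct.map f g t ∈ F.tensorBigraded n j :=
  (tensorBigraded_le fun a b k l ha hk x hx y hy =>
    tmul_mem_tensorBigraded (hf a k x hx) (hg b l y hy) (by omega) (by omega) :
      _ ≤ (F.tensorBigraded n j).comap (TensorProduct.map f g)) ht

theorem par_mem_bigraded (e : ℤ) {n : ℕ} {i : ℤ} {x : F.C} (hx : x ∈ F.bigraded n i) :
    F.par e x ∈ F.bigraded n i :=
  par_mem (bigraded_le_grC _ _ hx) hx

theorem map_comul_map_mul (hV : ⨆ i, grV i = ⊤) (u : V) (t : F.C ⊗[K] F.C) :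
    TensorProduct.map LinearMap.id F.comul (TensorProduct.map (F.mul hV u) LinearMap.id t)
      = TensorProduct.map (F.mul hV u) LinearMap.id (TensorProduct.map LinearMap.id F.comul t) := by
  simp only [TensorProduct.map_map, LinearMap.id_comp, LinearMap.comp_id]

/-- The interchange of the tensor factors, with the Koszul sign. -/
def swap (F : CofreeData K V grV) : F.C ⊗[K] F.C →ₗ[K] F.C ⊗[K] F.C :=
  TensorProduct.lift (ofComponents F.grC_internal fun i =>
    (TensorProduct.mk K F.C F.C).flip.compl₂ (F.par i))

theorem swap_tmul {i : ℤ} {x : F.C} (hx : x ∈ F.grC i) (y : F.C) :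
    F.swap (x ⊗ₜ[K] y) = F.par i y ⊗ₜ[K] x := by
  rw [swap, TensorProduct.lift.tmul, ofComponents_apply _ _ hx, LinearMap.compl₂_apply,
    LinearMap.flip_apply, TensorProduct.mk_apply]

theorem tensor_ext_left {W : Type*} [AddCommGroup W] [Module K W] {f g : F.C ⊗[K] F.C →ₗ[K] W}
    (h : ∀ i, ∀ x ∈ F.grC i, ∀ y, f (x ⊗ₜ[K] y) = g (x ⊗ₜ[K] y)) : f = g :=
  TensorProduct.ext <| linearMap_ext_of_iSup_eq_top F.grC_internal.submodule_iSup_eq_top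
    fun i x hx => LinearMap.ext (h i x hx)

theorem swap_swap (t : F.C ⊗[K] F.C) : F.swap (F.swap t) = t := by
  suffices F.swap ∘ₗ F.swap = LinearMap.id from LinearMap.congr_fun this t
  refine tensor_ext_left fun i x hx => LinearMap.congr_fun (f :=
    (F.swap ∘ₗ F.swap) ∘ₗ TensorProduct.mk K _ _ x) (g := TensorProduct.mk K _ _ x) ?_
  refine linearMap_ext_of_iSup_eq_top F.grC_internal.submodule_iSup_eq_top fun j y hy => ?_
  simp only [LinearMap.comp_apply, TensorProduct.mk_apply]
  rw [swap_tmul hx, F.par_apply i j y hy, ← TensorProduct.smul_tmul', map_smul, swap_tmul hy,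
    F.par_apply j i x hx, ← TensorProduct.smul_tmul', smul_smul, mul_comm j,
    neg_one_zpow_mul_self, one_smul]

theorem swap_map_mul (hV : ⨆ i, grV i = ⊤) {e : ℤ} {u : V} (hu : u ∈ grV (e + 1))
    (t : F.C ⊗[K] F.C) :
    F.swap (TensorProduct.map (F.mul hV u) LinearMap.id t)
      = TensorProduct.map (F.par e) (F.mul hV u) (F.swap t) := by
  suffices F.swap ∘ₗ TensorProduct.map (F.mul hV u) LinearMap.id
      = TensorProduct.map (F.par e) (F.mul hV u) ∘ₗ F.swap from LinearMap.congr_fun this t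
  refine tensor_ext_left fun i x hx y => ?_
  simp only [LinearMap.comp_apply, TensorProduct.map_tmul, LinearMap.id_apply, swap_tmul hx,
    swap_tmul (mul_mem_grC hV hu hx), par_par]

theorem swap_map_par_mul (hV : ⨆ i, grV i = ⊤) {e : ℤ} {u : V} (hu : u ∈ grV (e + 1))
    (t : F.C ⊗[K] F.C) :
    F.swap (TensorProduct.map (F.par e) (F.mul hV u) t)
      = TensorProduct.map (F.mul hV u) LinearMap.id (F.swap t) := by
  rw [← swap_swap t, ← swap_map_mul hV hu, swap_swap, swap_swap]

variable [CharZero K]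

theorem comul_mul_mem_tensorBigraded (hV : ⨆ i, grV i = ⊤) {n : ℕ} {e i : ℤ} {u : V} {x : F.C}
    (hu : u ∈ grV (e + 1)) (hx : x ∈ F.bigraded n i) (hcomul : F.comul x ∈ F.tensorBigraded n i) :
    F.comul (F.mul hV u x) ∈ F.tensorBigraded (n + 1) (e + i) := by
  have hmul (a : ℕ) (k : ℤ) (y : F.C) (hy : y ∈ F.bigraded a k) :
      F.mul hV u y ∈ F.bigraded (a + 1) (k + e) := by
    rw [add_comm k e]
    exact mul_mem_bigraded hV hu hy
  have hid (a : ℕ) (k : ℤ) (y : F.C) (hy : y ∈ F.bigraded a k) :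
      (LinearMap.id : F.C →ₗ[K] F.C) y ∈ F.bigraded (a + 0) (k + 0) := by
    rwa [add_zero, add_zero]
  have hpar (a : ℕ) (k : ℤ) (y : F.C) (hy : y ∈ F.bigraded a k) :
      F.par e y ∈ F.bigraded (a + 0) (k + 0) := by
    rw [add_zero, add_zero]
    exact par_mem_bigraded e hy
  rw [comul_mul hV hu]
  refine add_mem (add_mem (add_mem ?_ ?_) ?_) ?_
  · exact tmul_mem_tensorBigraded (incl_mem_bigraded hu) hx (by omega) rfl
  · exact tmul_mem_tensorBigraded (par_mem_bigraded e hx) (incl_mem_bigraded hu) rfl (by omega)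
  · exact map_mem_tensorBigraded hmul hid (by omega) (by omega) hcomul
  · exact map_mem_tensorBigraded hpar hmul (by omega) (by omega) hcomul

theorem comul_mem_tensorBigraded (hV : ⨆ i, grV i = ⊤) {n : ℕ} {i : ℤ} {x : F.C}
    (hx : x ∈ F.bigraded n i) : F.comul x ∈ F.tensorBigraded n i := by
  refine (bigraded_le fun d v hv hd => ?_ :
    F.bigraded n i ≤ (F.tensorBigraded n i).comap F.comul) hx
  rw [Submodule.mem_comap, ← hd]
  clear hd hx
  induction n with
  | zero => rw [word_zero, comul_incl]; exact zero_mem _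
  | succ n ih =>
    have htail (j : Fin (n + 1)) : Fin.tail v j ∈ grV (Fin.tail d j + 1) := hv j.succ
    rw [← Fin.cons_self_tail v, ← mul_word hV, Fin.sum_univ_succ]
    exact comul_mul_mem_tensorBigraded hV (hv 0) (word_mem_bigraded htail) (ih _ _ htail)

theorem comul_par (hV : ⨆ i, grV i = ⊤) (e : ℤ) (x : F.C) :
    F.comul (F.par e x) = TensorProduct.map (F.par e) (F.par e) (F.comul x) := by
  have htensor (n : ℕ) (i : ℤ) : F.tensorBigraded n i ≤ LinearMap.eqLocus
      (TensorProduct.map (F.par e) (F.par e)) ((-1 : K) ^ (e * i) • LinearMap.id) := by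
    refine tensorBigraded_le fun a b j k _ hi y hy z hz => ?_
    rw [LinearMap.mem_eqLocus, TensorProduct.map_tmul, F.par_apply e j y (bigraded_le_grC _ _ hy),
      F.par_apply e k z (bigraded_le_grC _ _ hz), TensorProduct.smul_tmul_smul, ← hi, mul_add,
      zpow_add₀ (by simp), LinearMap.smul_apply, LinearMap.id_apply]
  suffices F.comul ∘ₗ F.par e = TensorProduct.map (F.par e) (F.par e) ∘ₗ F.comul from
    LinearMap.congr_fun this x
  refine ext_word hV fun n d v hv => ?_
  rw [LinearMap.comp_apply, LinearMap.comp_apply, par_word e hv, map_smul,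
    htensor _ _ (comul_mem_tensorBigraded hV (word_mem_bigraded hv)), LinearMap.smul_apply,
    LinearMap.id_apply]

theorem assoc_map_comul_map_mul (hV : ⨆ i, grV i = ⊤) {e : ℤ} {u : V}
    (hu : u ∈ grV (e + 1)) (t : F.C ⊗[K] F.C) :
    TensorProduct.assoc K _ _ _
        (TensorProduct.map F.comul LinearMap.id (TensorProduct.map (F.mul hV u) LinearMap.id t))
      = F.incl u ⊗ₜ[K] t + TensorProduct.map (F.par e) (TensorProduct.mk K _ _ (F.incl u)) t
        + TensorProduct.map (F.mul hV u) LinearMap.id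
          (TensorProduct.assoc K _ _ _ (TensorProduct.map F.comul LinearMap.id t))
        + TensorProduct.map (F.par e) (TensorProduct.map (F.mul hV u) LinearMap.id)
          (TensorProduct.assoc K _ _ _ (TensorProduct.map F.comul LinearMap.id t)) := by
  rw [← TensorProduct.map_id, TensorProduct.map_map_assoc, TensorProduct.map_map_assoc]
  induction t with
  | zero => simp only [map_zero, TensorProduct.tmul_zero, add_zero]
  | add s t hs ht => simp only [map_add, TensorProduct.tmul_add, hs, ht]; abel
  | tmul x y =>
    simp only [TensorProduct.map_tmul, LinearMap.id_apply, comul_mul hV hu,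
      TensorProduct.add_tmul, map_add, TensorProduct.assoc_tmul, TensorProduct.mk_apply]

theorem map_comul_map_par_mul (hV : ⨆ i, grV i = ⊤) {e : ℤ} {u : V}
    (hu : u ∈ grV (e + 1)) (t : F.C ⊗[K] F.C) :
    TensorProduct.map LinearMap.id F.comul (TensorProduct.map (F.par e) (F.mul hV u) t)
      = TensorProduct.map (F.par e) (TensorProduct.mk K _ _ (F.incl u)) t
        + TensorProduct.assoc K _ _ _
          (TensorProduct.map (F.par e) (F.par e) t ⊗ₜ[K] F.incl u)
        + TensorProduct.map (F.par e) (TensorProduct.map (F.mul hV u) LinearMap.id)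
          (TensorProduct.map LinearMap.id F.comul t)
        + TensorProduct.map (F.par e) (TensorProduct.map (F.par e) (F.mul hV u))
          (TensorProduct.map LinearMap.id F.comul t) := by
  induction t with
  | zero => simp only [map_zero, TensorProduct.zero_tmul, add_zero]
  | add s t hs ht => simp only [map_add, TensorProduct.add_tmul, hs, ht]; abel
  | tmul x y =>
    simp only [TensorProduct.map_tmul, LinearMap.id_apply, comul_mul hV hu,
      TensorProduct.tmul_add, TensorProduct.assoc_tmul, TensorProduct.mk_apply]

theorem assoc_map_comul_map_par_mul (hV : ⨆ i, grV i = ⊤) (e : ℤ) (u : V) (t : F.C ⊗[K] F.C) :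
    TensorProduct.assoc K _ _ _
        (TensorProduct.map F.comul LinearMap.id (TensorProduct.map (F.par e) (F.mul hV u) t))
      = TensorProduct.map (F.par e) (TensorProduct.map (F.par e) (F.mul hV u))
        (TensorProduct.assoc K _ _ _ (TensorProduct.map F.comul LinearMap.id t)) := by
  rw [TensorProduct.map_map_assoc]
  congr 1
  induction t with
  | zero => simp only [map_zero]
  | add s t hs ht => simp only [map_add, hs, ht]
  | tmul x y => simp only [TensorProduct.map_tmul, LinearMap.id_apply, comul_par hV]

theorem comul_coassoc (hV : ⨆ i, grV i = ⊤) (x : F.C) :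
    TensorProduct.assoc K _ _ _ (TensorProduct.map F.comul LinearMap.id (F.comul x))
      = TensorProduct.map LinearMap.id F.comul (F.comul x) := by
  suffices (TensorProduct.assoc K _ _ _).toLinearMap ∘ₗ
      TensorProduct.map F.comul LinearMap.id ∘ₗ F.comul
      = TensorProduct.map LinearMap.id F.comul ∘ₗ F.comul from LinearMap.congr_fun this x
  refine ext_incl_mul hV (fun i u _ => by simp only [LinearMap.comp_apply, comul_incl, map_zero])
    fun e u hu x ih => ?_
  simp only [LinearMap.comp_apply, LinearEquiv.coe_coe] at ih ⊢
  rw [comul_mul hV hu]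
  simp only [map_add, assoc_map_comul_map_mul hV hu, assoc_map_comul_map_par_mul,
    map_comul_map_par_mul hV hu, map_comul_map_mul, TensorProduct.map_tmul, comul_incl,
    TensorProduct.zero_tmul, TensorProduct.tmul_zero, map_zero, LinearMap.id_apply,
    comul_par hV, ih]
  abel

theorem swap_comul (hV : ⨆ i, grV i = ⊤) (x : F.C) : F.swap (F.comul x) = F.comul x := by
  suffices F.swap ∘ₗ F.comul = F.comul from LinearMap.congr_fun this x
  refine ext_incl_mul hV (fun i u _ => by rw [LinearMap.comp_apply, comul_incl, map_zero])
    fun e u hu x ih => ?_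
  have hincl (y : F.C) : F.swap (F.incl u ⊗ₜ[K] y) = F.par e y ⊗ₜ[K] F.incl u :=
    swap_tmul (incl_mem_grC hu) y
  rw [LinearMap.comp_apply] at ih
  rw [LinearMap.comp_apply, comul_mul hV hu, map_add, map_add, map_add, ← hincl, swap_swap, hincl,
    swap_map_mul hV hu, swap_map_par_mul hV hu, ih]
  abel

end CofreeData

/-! ### Lifting linear maps to coderivations -/

namespace CofreeData

section Lifting

variable {V' : Type} [AddCommGroup V'] [Module K V'] {grV' : ℤ → Submodule K V'}
  {F : CofreeData K V grV} {F' : CofreeData K V' grV'}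

theorem par_map_of_degree {A : F.C →ₗ[K] F'.C} {m : ℤ}
    (hA : ∀ i, ∀ x ∈ F.grC i, A x ∈ F'.grC (i + m)) (e : ℤ) (x : F.C) :
    F'.par e (A x) = (-1 : K) ^ (e * m) • A (F.par e x) := by
  suffices F'.par e ∘ₗ A = (-1 : K) ^ (e * m) • A ∘ₗ F.par e from LinearMap.congr_fun this x
  refine linearMap_ext_of_iSup_eq_top F.grC_internal.submodule_iSup_eq_top fun i x hx => ?_
  rw [LinearMap.comp_apply, F'.par_apply e _ _ (hA i x hx), LinearMap.smul_apply,
    LinearMap.comp_apply, F.par_apply e i x hx, map_smul, smul_smul, mul_add, add_comm,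
    zpow_add₀ (by simp)]

theorem par_map {A : F.C →ₗ[K] F'.C} (hA : ∀ i, ∀ x ∈ F.grC i, A x ∈ F'.grC i) (e : ℤ) (x : F.C) :
    F'.par e (A x) = A (F.par e x) := by
  rw [par_map_of_degree (m := 0) (by simpa only [add_zero] using hA), mul_zero, zpow_zero,
    one_smul]

/-- The linear map `x ⊗ y ↦ q x · A y`. -/
def tmulLift (hV' : ⨆ i, grV' i = ⊤) (q : F.C →ₗ[K] V') (A : F.C →ₗ[K] F'.C) :
    F.C ⊗[K] F.C →ₗ[K] F'.C :=
  TensorProduct.lift ((F'.mul hV').compl₁₂ q A)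

theorem tmulLift_tmul (hV' : ⨆ i, grV' i = ⊤) (q : F.C →ₗ[K] V') (A : F.C →ₗ[K] F'.C) (x y : F.C) :
    tmulLift hV' q A (x ⊗ₜ[K] y) = F'.mul hV' (q x) (A y) := rfl

theorem xi_tmulLift (hV' : ⨆ i, grV' i = ⊤) (q : F.C →ₗ[K] V') (A : F.C →ₗ[K] F'.C)
    (t : F.C ⊗[K] F.C) : F'.xi (tmulLift hV' q A t) = 0 := by
  have : F'.xi ∘ₗ tmulLift hV' q A = 0 := TensorProduct.ext' fun x y => xi_mul hV' _ _
  exact LinearMap.congr_fun this t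

/-- The linear map `ι q + m (q ⊗ A) Δ`, where `ι` is the inclusion of the cogenerators and `m` the
multiplication by cogenerators. It is a coderivation along `A` with corestriction `q` whenever `A`
is a morphism. -/
def lifting (hV' : ⨆ i, grV' i = ⊤) (q : F.C →ₗ[K] V') (A : F.C →ₗ[K] F'.C) : F.C →ₗ[K] F'.C :=
  F'.incl ∘ₗ q + tmulLift hV' q A ∘ₗ F.comul

theorem lifting_apply (hV' : ⨆ i, grV' i = ⊤) (q : F.C →ₗ[K] V') (A : F.C →ₗ[K] F'.C) (x : F.C) :
    lifting hV' q A x = F'.incl (q x) + tmulLift hV' q A (F.comul x) := rfl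

theorem xi_lifting (hV' : ⨆ i, grV' i = ⊤) (q : F.C →ₗ[K] V') (A : F.C →ₗ[K] F'.C) (x : F.C) :
    F'.xi (lifting hV' q A x) = q x := by
  rw [lifting_apply, map_add, xi_incl, xi_tmulLift, add_zero]

theorem comul_tmulLift_tmul [CharZero K] (hV' : ⨆ i, grV' i = ⊤) {e : ℤ} {q : F.C →ₗ[K] V'}
    {A : F.C →ₗ[K] F'.C} (hA : ∀ i, ∀ x ∈ F.grC i, A x ∈ F'.grC i) {j : ℤ} {y z : F.C}
    (hy : y ∈ F.grC j) (hq : q y ∈ grV' (j + e + 1))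
    (hz : F'.comul (A z) = TensorProduct.map A A (F.comul z)) :
    F'.comul (tmulLift hV' q A (y ⊗ₜ[K] z))
      = TensorProduct.map (F'.incl ∘ₗ q) A (y ⊗ₜ[K] z)
        + TensorProduct.map (A ∘ₗ F.par e) (F'.incl ∘ₗ q) (F.swap (y ⊗ₜ[K] z))
        + TensorProduct.map (tmulLift hV' q A) A
          ((TensorProduct.assoc K _ _ _).symm (y ⊗ₜ[K] F.comul z))
        + TensorProduct.map (A ∘ₗ F.par e) (tmulLift hV' q A) (TensorProduct.assoc K _ _ _
          (TensorProduct.map F.swap LinearMap.id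
            ((TensorProduct.assoc K _ _ _).symm (y ⊗ₜ[K] F.comul z)))) := by
  have hpar (x : F.C) : F'.par (j + e) (A x) = A (F.par e (F.par j x)) := by
    rw [par_map hA, par_par, add_comm]
  rw [tmulLift_tmul, comul_mul hV' hq, hz, swap_tmul hy, hpar, TensorProduct.map_tmul,
    TensorProduct.map_tmul]
  congr 1
  · congr 1
    induction F.comul z with
    | zero => simp only [map_zero, TensorProduct.tmul_zero]
    | add s t hs ht => simp only [map_add, TensorProduct.tmul_add, hs, ht]
    | tmul a b =>
      simp only [TensorProduct.map_tmul, TensorProduct.assoc_symm_tmul, tmulLift_tmul,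
        LinearMap.id_apply]
  · induction F.comul z with
    | zero => simp only [map_zero, TensorProduct.tmul_zero]
    | add s t hs ht => simp only [map_add, TensorProduct.tmul_add, hs, ht]
    | tmul a b =>
      simp only [TensorProduct.map_tmul, TensorProduct.assoc_symm_tmul, tmulLift_tmul,
        LinearMap.id_apply, swap_tmul hy, TensorProduct.assoc_tmul, hpar, LinearMap.comp_apply]

variable [CharZero K]

theorem eq_comul_of_mem_wt (hV : ⨆ i, grV i = ⊤) {W : Type*} [AddCommGroup W] [Module K W]
    {n : ℕ} {f g : F.C ⊗[K] F.C →ₗ[K] W}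
    (h : ∀ a b j k, a + b + 1 = n → ∀ x ∈ F.bigraded a j, ∀ y ∈ F.bigraded b k,
      f (x ⊗ₜ[K] y) = g (x ⊗ₜ[K] y)) {x : F.C} (hx : x ∈ F.wt n) :
    f (F.comul x) = g (F.comul x) := by
  rw [wt_eq_iSup_bigraded hV] at hx
  refine (iSup_le fun i x hx => ?_ : _ ≤ (LinearMap.eqLocus f g).comap F.comul) hx
  exact (tensorBigraded_le fun a b j k hn _ => h a b j k hn : _ ≤ LinearMap.eqLocus f g)
    (comul_mem_tensorBigraded hV hx)

theorem map_comul_congr (hV : ⨆ i, grV i = ⊤) {W₁ W₂ : Type*} [AddCommGroup W₁] [Module K W₁]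
    [AddCommGroup W₂] [Module K W₂] {n : ℕ} {f f' : F.C →ₗ[K] W₁} {g g' : F.C →ₗ[K] W₂}
    (hf : ∀ m < n, ∀ x ∈ F.wt m, f x = f' x) (hg : ∀ m < n, ∀ x ∈ F.wt m, g x = g' x) {x : F.C}
    (hx : x ∈ F.wt n) :
    TensorProduct.map f g (F.comul x) = TensorProduct.map f' g' (F.comul x) :=
  eq_comul_of_mem_wt hV (fun a b j k hn x hx y hy => by
    rw [TensorProduct.map_tmul, TensorProduct.map_tmul, hf a (by omega) x (bigraded_le_wt _ _ hx),
      hg b (by omega) y (bigraded_le_wt _ _ hy)]) hx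

theorem tmulLift_comul_congr (hV : ⨆ i, grV i = ⊤) (hV' : ⨆ i, grV' i = ⊤) {n : ℕ}
    {q q' : F.C →ₗ[K] V'} {A A' : F.C →ₗ[K] F'.C}
    (hq : ∀ m < n, ∀ x ∈ F.wt m, q x = q' x) (hA : ∀ m < n, ∀ x ∈ F.wt m, A x = A' x) {x : F.C}
    (hx : x ∈ F.wt n) : tmulLift hV' q A (F.comul x) = tmulLift hV' q' A' (F.comul x) :=
  eq_comul_of_mem_wt hV (fun a b j k hn x hx y hy => by
    rw [tmulLift_tmul, tmulLift_tmul, hq a (by omega) x (bigraded_le_wt _ _ hx),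
      hA b (by omega) y (bigraded_le_wt _ _ hy)]) hx

theorem tmulLift_comul_mem_grC (hV : ⨆ i, grV i = ⊤) (hV' : ⨆ i, grV' i = ⊤) {n : ℕ} {e : ℤ}
    {q : F.C →ₗ[K] V'} {A : F.C →ₗ[K] F'.C}
    (hq : ∀ m < n, ∀ i, ∀ x ∈ F.bigraded m i, q x ∈ grV' (i + e + 1))
    (hA : ∀ m < n, ∀ i, ∀ x ∈ F.bigraded m i, A x ∈ F'.grC i) {i : ℤ} {x : F.C}
    (hx : x ∈ F.bigraded n i) : tmulLift hV' q A (F.comul x) ∈ F'.grC (i + e) :=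
  (tensorBigraded_le fun a b j k hn hi x hx y hy => by
    rw [Submodule.mem_comap, tmulLift_tmul, ← hi, add_right_comm]
    exact mul_mem_grC hV' (hq a (by omega) j x hx) (hA b (by omega) k y hy) :
    F.tensorBigraded n i ≤ (F'.grC (i + e)).comap (tmulLift hV' q A))
    (comul_mem_tensorBigraded hV hx)

theorem lifting_mem_grC (hV : ⨆ i, grV i = ⊤) (hV' : ⨆ i, grV' i = ⊤) {e : ℤ}
    {q : F.C →ₗ[K] V'} {A : F.C →ₗ[K] F'.C} (hq : ∀ i, ∀ x ∈ F.grC i, q x ∈ grV' (i + e + 1))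
    (hA : ∀ i, ∀ x ∈ F.grC i, A x ∈ F'.grC i) {i : ℤ} {x : F.C} (hx : x ∈ F.grC i) :
    lifting hV' q A x ∈ F'.grC (i + e) :=
  (grC_le hV fun _ x hx => add_mem (incl_mem_grC (hq i x (bigraded_le_grC _ _ hx)))
    (tmulLift_comul_mem_grC hV hV' (fun _ _ i x hx => hq i x (bigraded_le_grC _ _ hx))
      (fun _ _ i x hx => hA i x (bigraded_le_grC _ _ hx)) hx) :
    F.grC i ≤ (F'.grC (i + e)).comap (lifting hV' q A)) hx

theorem comul_tmulLift_comul (hV : ⨆ i, grV i = ⊤) (hV' : ⨆ i, grV' i = ⊤) {n : ℕ} {e : ℤ}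
    {q : F.C →ₗ[K] V'} {A : F.C →ₗ[K] F'.C} (hq : ∀ i, ∀ x ∈ F.grC i, q x ∈ grV' (i + e + 1))
    (hA : ∀ i, ∀ x ∈ F.grC i, A x ∈ F'.grC i)
    (hAcomul : ∀ m < n, ∀ x ∈ F.wt m, F'.comul (A x) = TensorProduct.map A A (F.comul x))
    {x : F.C} (hx : x ∈ F.wt n) :
    F'.comul (tmulLift hV' q A (F.comul x))
      = TensorProduct.map (F'.incl ∘ₗ q) A (F.comul x)
        + TensorProduct.map (A ∘ₗ F.par e) (F'.incl ∘ₗ q) (F.comul x)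
        + TensorProduct.map (tmulLift hV' q A ∘ₗ F.comul) A (F.comul x)
        + TensorProduct.map (A ∘ₗ F.par e) (tmulLift hV' q A ∘ₗ F.comul) (F.comul x) := by
  have hcoassoc : (TensorProduct.assoc K _ _ _).symm
      (TensorProduct.map LinearMap.id F.comul (F.comul x))
      = TensorProduct.map F.comul LinearMap.id (F.comul x) := by
    rw [← comul_coassoc hV, LinearEquiv.symm_apply_apply]
  have hswap : TensorProduct.map F.swap LinearMap.id
      (TensorProduct.map F.comul LinearMap.id (F.comul x))
      = TensorProduct.map F.comul LinearMap.id (F.comul x) := by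
    rw [TensorProduct.map_map, LinearMap.id_comp, LinearMap.ext (swap_comul hV) (f := F.swap ∘ₗ _)]
  have hexpand := eq_comul_of_mem_wt hV (f := F'.comul ∘ₗ tmulLift hV' q A)
    (g := TensorProduct.map (F'.incl ∘ₗ q) A
      + TensorProduct.map (A ∘ₗ F.par e) (F'.incl ∘ₗ q) ∘ₗ F.swap
      + TensorProduct.map (tmulLift hV' q A) A ∘ₗ (TensorProduct.assoc K _ _ _).symm.toLinearMap
        ∘ₗ TensorProduct.map LinearMap.id F.comul
      + TensorProduct.map (A ∘ₗ F.par e) (tmulLift hV' q A)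
        ∘ₗ (TensorProduct.assoc K _ _ _).toLinearMap ∘ₗ TensorProduct.map F.swap LinearMap.id
        ∘ₗ (TensorProduct.assoc K _ _ _).symm.toLinearMap
        ∘ₗ TensorProduct.map LinearMap.id F.comul)
    (fun a b j k hn y hy z hz => comul_tmulLift_tmul hV' hA (bigraded_le_grC _ _ hy)
      (hq j y (bigraded_le_grC _ _ hy)) (hAcomul b (by omega) z (bigraded_le_wt _ _ hz))) hx
  simp only [LinearMap.add_apply, LinearMap.comp_apply, LinearEquiv.coe_coe, swap_comul hV,
    hcoassoc, hswap, comul_coassoc hV] at hexpand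
  simpa only [TensorProduct.map_map, LinearMap.comp_id] using hexpand

theorem comul_lifting (hV : ⨆ i, grV i = ⊤) (hV' : ⨆ i, grV' i = ⊤) {n : ℕ} {e : ℤ}
    {q : F.C →ₗ[K] V'} {A : F.C →ₗ[K] F'.C} (hq : ∀ i, ∀ x ∈ F.grC i, q x ∈ grV' (i + e + 1))
    (hA : ∀ i, ∀ x ∈ F.grC i, A x ∈ F'.grC i)
    (hAcomul : ∀ m < n, ∀ x ∈ F.wt m, F'.comul (A x) = TensorProduct.map A A (F.comul x))
    {x : F.C} (hx : x ∈ F.wt n) :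
    F'.comul (lifting hV' q A x)
      = TensorProduct.map (lifting hV' q A) A (F.comul x)
        + TensorProduct.map (A ∘ₗ F.par e) (lifting hV' q A) (F.comul x) := by
  rw [lifting_apply, map_add, comul_incl, zero_add,
    comul_tmulLift_comul hV hV' hq hA hAcomul hx, lifting, TensorProduct.map_add_left,
    TensorProduct.map_add_right, LinearMap.add_apply, LinearMap.add_apply]
  abel

end Lifting

theorem isCoderivation_lifting [CharZero K] {F : CofreeData K V grV} (hV : ⨆ i, grV i = ⊤) {e : ℤ}
    {q : F.C →ₗ[K] V} (hq : ∀ i, ∀ x ∈ F.grC i, q x ∈ grV (i + e + 1)) :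
    F.IsCoderivation e (lifting hV q LinearMap.id) := by
  refine ⟨fun i x hx => lifting_mem_grC hV hV hq (fun _ _ hx => hx) hx,
    linearMap_ext_of_iSup_eq_top F.wt_internal.submodule_iSup_eq_top fun n x hx => ?_⟩
  refine (comul_lifting hV hV hq (fun _ _ hx => hx) (fun _ _ _ _ => ?_) hx).trans ?_
  · rw [TensorProduct.map_id, LinearMap.id_apply, LinearMap.id_apply]
  · rw [LinearMap.id_comp, ← LinearMap.add_apply, LinearMap.comp_apply]

end CofreeData

/-! ### The Euler operator and primitive elements -/

namespace CofreeData

variable {F : CofreeData K V grV}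

/-- The Euler operator: the coderivation of degree `0` with corestriction `ξ`, acting on the part of
weight `n` as multiplication by the word length `n + 1`. -/
def euler (F : CofreeData K V grV) (hV : ⨆ i, grV i = ⊤) : F.C →ₗ[K] F.C :=
  lifting hV F.xi LinearMap.id

theorem tmulLift_xi_cut_zero (hV : ⨆ i, grV i = ⊤) {n : ℕ} (w : Fin (n + 2) → V) :
    tmulLift hV F.xi LinearMap.id (F.cut n 0 w) = F.word (n + 1) w := by
  rw [← Fin.cons_self_tail w, cut_cons_zero, tmulLift_tmul, xi_incl, LinearMap.id_apply, mul_word]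

theorem tmulLift_xi_cut_succ (hV : ⨆ i, grV i = ⊤) {n : ℕ} (k : Fin n) (w : Fin (n + 2) → V) :
    tmulLift hV F.xi LinearMap.id (F.cut n k.succ w) = 0 := by
  have hxi : F.xi (F.word (k.succ : Fin (n + 1)) fun i => w (headEmb k.succ i)) = 0 :=
    F.xi_word k _
  rw [cut, tmulLift_tmul, hxi, map_zero, LinearMap.zero_apply]

/-- The inverse of the Euler operator. -/
def eulerInv (F : CofreeData K V grV) : F.C →ₗ[K] F.C :=
  ofComponents F.wt_internal fun n => ((n + 1 : ℕ) : K)⁻¹ • LinearMap.id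

theorem eulerInv_of_mem_wt {n : ℕ} {x : F.C} (hx : x ∈ F.wt n) :
    F.eulerInv x = ((n + 1 : ℕ) : K)⁻¹ • x :=
  ofComponents_apply F.wt_internal _ hx

variable [CharZero K]

theorem isCoderivation_euler (hV : ⨆ i, grV i = ⊤) : F.IsCoderivation 0 (F.euler hV) :=
  isCoderivation_lifting hV fun i x hx => by simpa only [add_zero] using xi_mem hV hx

theorem tmulLift_xi_comul_word (hV : ⨆ i, grV i = ⊤) {n : ℕ} {d : Fin (n + 2) → ℤ}
    {v : Fin (n + 2) → V} (hv : ∀ i, v i ∈ grV (d i + 1)) :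
    tmulLift hV F.xi LinearMap.id (F.comul (F.word (n + 1) v))
      = ((n + 1 + 1 : ℕ) : K) • F.word (n + 1) v := by
  have hcoeff : (((n + 1).factorial * (0 + 1).factorial : ℕ) : K)⁻¹ * ((n + 1 + 1).factorial : K)
      = ((n + 1 + 1 : ℕ) : K) := by
    rw [zero_add, Nat.factorial_one, mul_one, Nat.factorial_succ (n + 1), Nat.cast_mul,
      mul_left_comm, inv_mul_cancel₀ (Nat.cast_ne_zero.2 (Nat.factorial_ne_zero _)), mul_one]
  rw [comul_word_eq_sum_signedCut hv, map_sum, Fin.sum_univ_succ]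
  simp only [signedCut, map_smul, map_sum, tmulLift_xi_cut_zero, tmulLift_xi_cut_succ, smul_zero,
    Finset.sum_const_zero, add_zero]
  rw [sum_koszulSign_smul_word hv, smul_smul]
  exact congrArg (· • F.word (n + 1) v) hcoeff

theorem euler_of_mem_wt (hV : ⨆ i, grV i = ⊤) {n : ℕ} {x : F.C} (hx : x ∈ F.wt n) :
    F.euler hV x = ((n + 1 : ℕ) : K) • x := by
  rw [euler, lifting_apply]
  cases n with
  | zero =>
    rw [← incl_xi hx, comul_incl, map_zero, add_zero, xi_incl, zero_add, Nat.cast_one, one_smul]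
  | succ n =>
    rw [xi_of_mem_wt_succ hx, map_zero, zero_add]
    rw [wt_eq_iSup_bigraded hV] at hx
    refine (iSup_le fun i => bigraded_le fun d v hv _ => tmulLift_xi_comul_word hV hv : _ ≤
      LinearMap.eqLocus (tmulLift hV F.xi LinearMap.id ∘ₗ F.comul)
        (((n + 1 + 1 : ℕ) : K) • LinearMap.id)) hx

theorem eulerInv_euler (hV : ⨆ i, grV i = ⊤) (x : F.C) : F.eulerInv (F.euler hV x) = x := by
  suffices F.eulerInv ∘ₗ F.euler hV = LinearMap.id from LinearMap.congr_fun this x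
  refine linearMap_ext_of_iSup_eq_top F.wt_internal.submodule_iSup_eq_top fun n x hx => ?_
  rw [LinearMap.comp_apply, euler_of_mem_wt hV hx, map_smul, eulerInv_of_mem_wt hx,
    smul_inv_smul₀ (Nat.cast_ne_zero.2 n.succ_ne_zero), LinearMap.id_apply]

theorem eq_zero_of_comul_eq_zero (hV : ⨆ i, grV i = ⊤) {x : F.C} (hcomul : F.comul x = 0)
    (hxi : F.xi x = 0) : x = 0 := by
  rw [← eulerInv_euler hV x, euler, lifting_apply, hcomul, hxi, map_zero, map_zero, add_zero,
    map_zero]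

theorem eq_incl_of_comul_eq_zero (hV : ⨆ i, grV i = ⊤) {x : F.C} (h : F.comul x = 0) :
    x = F.incl (F.xi x) :=
  sub_eq_zero.1 <| eq_zero_of_comul_eq_zero hV (by rw [map_sub, h, comul_incl, sub_zero])
    (by rw [map_sub, xi_incl, sub_self])

end CofreeData

/-! ### Contractions onto cohomology -/

section Contraction

theorem component_map_of_injective {ι ι' M N : Type*} [DecidableEq ι] [DecidableEq ι']
    [AddCommGroup M] [Module K M] [AddCommGroup N] [Module K N] {A : ι → Submodule K M}
    {B : ι' → Submodule K N} (hA : DirectSum.IsInternal A) (hB : DirectSum.IsInternal B)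
    {σ : ι → ι'} (hσ : Function.Injective σ) {g : M →ₗ[K] N} (hg : ∀ i, ∀ x ∈ A i, g x ∈ B (σ i))
    (i : ι) (x : M) : component hB (σ i) (g x) = g (component hA i x) := by
  suffices component hB (σ i) ∘ₗ g = g ∘ₗ component hA i from LinearMap.congr_fun this x
  refine linearMap_ext_of_iSup_eq_top hA.submodule_iSup_eq_top fun j x hx => ?_
  rw [LinearMap.comp_apply, LinearMap.comp_apply]
  obtain rfl | hji := eq_or_ne j i
  · rw [component_of_mem hA hx, component_of_mem hB (hg j x hx)]
  · rw [component_of_mem_ne hA hji hx, component_of_mem_ne hB (hσ.ne hji) (hg j x hx), map_zero]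

variable {L H : Type*} [AddCommGroup L] [Module K L] [AddCommGroup H] [Module K H]
  {d : L →ₗ[K] L} {f : H →ₗ[K] L}

theorem exists_linear_decomposition_of_cocycles (hd : ∀ y, d (d y) = 0) (hdf : ∀ a, d (f a) = 0)
    (hsurj : ∀ y, d y = 0 → ∃ a u, y = f a + d u) :
    ∃ (a : LinearMap.ker d →ₗ[K] H) (u : LinearMap.ker d →ₗ[K] L), ∀ z, f (a z) + d (u z) = z := by
  let φ : H × L →ₗ[K] LinearMap.ker d := (LinearMap.coprod f d).codRestrict _ fun x => by
    rw [LinearMap.mem_ker, LinearMap.coprod_apply, map_add, hdf, hd, add_zero]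
  have hφ : LinearMap.range φ = ⊤ := by
    rw [LinearMap.range_eq_top]
    rintro ⟨y, hy⟩
    obtain ⟨a, u, rfl⟩ := hsurj y hy
    exact ⟨(a, u), Subtype.ext (LinearMap.coprod_apply f d (a, u))⟩
  obtain ⟨s, hs⟩ := φ.exists_rightInverse_of_surjective hφ
  exact ⟨LinearMap.fst K H L ∘ₗ s, LinearMap.snd K H L ∘ₗ s, fun z =>
    (LinearMap.coprod_apply f d (s z)).symm.trans (congrArg Subtype.val (LinearMap.congr_fun hs z))⟩

theorem exists_contraction (hd : ∀ y, d (d y) = 0) (hdf : ∀ a, d (f a) = 0)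
    (hinj : ∀ a, (∃ u, f a = d u) → a = 0) (hsurj : ∀ y, d y = 0 → ∃ a u, y = f a + d u) :
    ∃ (p : L →ₗ[K] H) (h : L →ₗ[K] L), ∀ y, d (h y) + h (d y) = y - f (p y) := by
  obtain ⟨a, u, hau⟩ := exists_linear_decomposition_of_cocycles hd hdf hsurj
  let δ : L →ₗ[K] LinearMap.ker d := d.codRestrict _ hd
  have hδ (y : L) : d (u (δ y)) = d y := by
    have hdecomp : f (a (δ y)) + d (u (δ y)) = d y := hau (δ y)
    have ha : a (δ y) = 0 := hinj _ ⟨y - u (δ y), by rw [map_sub, ← hdecomp, add_sub_cancel_right]⟩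
    rwa [ha, map_zero, zero_add] at hdecomp
  let N : L →ₗ[K] LinearMap.ker d := (LinearMap.id - u ∘ₗ δ).codRestrict _ fun y => by
    simp only [LinearMap.mem_ker, LinearMap.sub_apply, LinearMap.id_apply, LinearMap.comp_apply,
      map_sub, hδ, sub_self]
  have hN (y : L) : N (d y) = δ y := Subtype.ext <| by
    have hδd : δ (d y) = 0 := Subtype.ext (hd y)
    change d y - u (δ (d y)) = d y
    rw [hδd, map_zero, sub_zero]
  refine ⟨a ∘ₗ N, u ∘ₗ N, fun y => ?_⟩
  have hdecomp : f (a (N y)) + d (u (N y)) = y - u (δ y) := hau (N y)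
  simp only [LinearMap.comp_apply]
  rw [hN, eq_sub_iff_add_eq, add_right_comm, add_comm (d _), hdecomp, sub_add_cancel]

theorem exists_graded_contraction {grL : ℤ → Submodule K L} {grH : ℤ → Submodule K H}
    (hL : DirectSum.IsInternal grL) (hH : DirectSum.IsInternal grH)
    (hddeg : ∀ i, ∀ y ∈ grL i, d y ∈ grL (i + 1)) (hfdeg : ∀ i, ∀ a ∈ grH i, f a ∈ grL i)
    (hd : ∀ y, d (d y) = 0) (hdf : ∀ a, d (f a) = 0)
    (hinj : ∀ a, (∃ u, f a = d u) → a = 0) (hsurj : ∀ y, d y = 0 → ∃ a u, y = f a + d u) :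
    ∃ (p : L →ₗ[K] H) (h : L →ₗ[K] L), (∀ i, ∀ y ∈ grL i, p y ∈ grH i) ∧
      (∀ i, ∀ y ∈ grL (i + 1), h y ∈ grL i) ∧ ∀ y, d (h y) + h (d y) = y - f (p y) := by
  obtain ⟨p, h, hph⟩ := exists_contraction hd hdf hinj hsurj
  have hcomp (i : ℤ) (y : L) (hy : y ∈ grL (i + 1)) :
      d (component hL i (h y)) + component hL (i + 1) (h (d y))
        = y - f (component hH (i + 1) (p y)) := by
    rw [← component_map_of_injective hL hL (add_left_injective 1) hddeg,
      ← component_map_of_injective hH hL Function.injective_id hfdeg, ← map_add, id, hph, map_sub,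
      component_of_mem hL hy]
  let p' : L →ₗ[K] H := ofComponents hL fun i => component hH i ∘ₗ p
  let h' : L →ₗ[K] L := ofComponents hL fun i => component hL (i - 1) ∘ₗ h
  have hp' (i : ℤ) (y : L) (hy : y ∈ grL i) : p' y = component hH i (p y) :=
    ofComponents_apply hL _ hy
  have hh' (i : ℤ) (y : L) (hy : y ∈ grL (i + 1)) : h' y = component hL i (h y) := by
    rw [ofComponents_apply hL _ hy, add_sub_cancel_right, LinearMap.comp_apply]
  refine ⟨p', h', fun i y hy => hp' i y hy ▸ component_mem hH i (p y),
    fun i y hy => hh' i y hy ▸ component_mem hL i (h y), fun y => ?_⟩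
  suffices d ∘ₗ h' + h' ∘ₗ d = LinearMap.id - f ∘ₗ p' from LinearMap.congr_fun this y
  refine linearMap_ext_of_iSup_eq_top hL.submodule_iSup_eq_top fun i y hy => ?_
  obtain ⟨i, rfl⟩ : ∃ j, i = j + 1 := ⟨i - 1, (sub_add_cancel i 1).symm⟩
  change d (h' y) + h' (d y) = y - f (p' y)
  rw [hp' _ _ hy, hh' _ _ hy, hh' _ _ (hddeg _ _ hy), hcomp i y hy]

end Contraction

/-! ### Morphisms with prescribed corestriction -/

theorem exists_fixedPoint_of_graded {M W : Type*} [AddCommGroup M] [Module K M] [AddCommGroup W]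
    [Module K W] {A : ℕ → Submodule K M} (hA : DirectSum.IsInternal A)
    (T : (M →ₗ[K] W) → M →ₗ[K] W)
    (hT : ∀ n g g', (∀ m < n, ∀ x ∈ A m, g x = g' x) → ∀ x ∈ A n, T g x = T g' x) :
    ∃ g, T g = g := by
  have hiterate (k : ℕ) : T^[k + 1] 0 = T (T^[k] 0) := Function.iterate_succ_apply' T k 0
  have hstable (k l : ℕ) (hkl : k ≤ l) : ∀ m < k, ∀ x ∈ A m, T^[l] 0 x = T^[k] 0 x := by
    induction k generalizing l with
    | zero => exact fun m hm => absurd hm m.not_lt_zero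
    | succ k ih =>
      obtain ⟨l, rfl⟩ : ∃ l', l = l' + 1 := ⟨l - 1, by omega⟩
      intro m hm x hx
      rw [hiterate, hiterate]
      exact hT m _ _ (fun m' hm' => ih l (by omega) m' (by omega)) x hx
  refine ⟨ofComponents hA fun n => T^[n + 1] 0,
    linearMap_ext_of_iSup_eq_top hA.submodule_iSup_eq_top fun n x hx => ?_⟩
  rw [ofComponents_apply hA _ hx, hiterate]
  refine hT n _ _ (fun m hm y hy => ?_) x hx
  rw [ofComponents_apply hA _ hy, hstable (m + 1) n hm m m.lt_succ_self y hy]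

namespace CofreeData

theorem IsCoderivation.comul_apply {F : CofreeData K V grV} {m : ℤ} {D : F.C →ₗ[K] F.C}
    (hD : F.IsCoderivation m D) (x : F.C) :
    F.comul (D x) = TensorProduct.map D LinearMap.id (F.comul x)
      + TensorProduct.map (F.par m) D (F.comul x) :=
  LinearMap.congr_fun hD.2 x

variable {V' : Type} [AddCommGroup V'] [Module K V'] {grV' : ℤ → Submodule K V'}
  {F : CofreeData K V grV} {F' : CofreeData K V' grV'}

theorem IsMorphism.comul_apply {Φ : F.C →ₗ[K] F'.C} (hΦ : F.IsMorphism F' Φ) (x : F.C) :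
    F'.comul (Φ x) = TensorProduct.map Φ Φ (F.comul x) :=
  LinearMap.congr_fun hΦ.2 x

/-- The operator `A ↦ m (ξ A E ⊗ A) Δ E⁻¹`, where `E` is the Euler operator. For a morphism `Φ` the
composite `Φ E` is a coderivation along `Φ`, hence the lifting of its corestriction `ξ Φ E`, so that
this operator computes `Φ - ι ξ Φ` in weight `n` from the values of `Φ` in weights below `n`. -/
def decomposablePart (hV : ⨆ i, grV i = ⊤) (hV' : ⨆ i, grV' i = ⊤) (A : F.C →ₗ[K] F'.C) :
    F.C →ₗ[K] F'.C :=
  tmulLift hV' (F'.xi ∘ₗ A ∘ₗ F.euler hV) A ∘ₗ F.comul ∘ₗ F.eulerInv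

theorem decomposablePart_apply (hV : ⨆ i, grV i = ⊤) (hV' : ⨆ i, grV' i = ⊤) (A : F.C →ₗ[K] F'.C)
    (x : F.C) : decomposablePart hV hV' A x
      = tmulLift hV' (F'.xi ∘ₗ A ∘ₗ F.euler hV) A (F.comul (F.eulerInv x)) := rfl

theorem xi_decomposablePart (hV : ⨆ i, grV i = ⊤) (hV' : ⨆ i, grV' i = ⊤) (A : F.C →ₗ[K] F'.C)
    (x : F.C) : F'.xi (decomposablePart hV hV' A x) = 0 :=
  xi_tmulLift hV' _ A _

variable [CharZero K]

theorem decomposablePart_congr (hV : ⨆ i, grV i = ⊤) (hV' : ⨆ i, grV' i = ⊤) {n : ℕ}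
    {A A' : F.C →ₗ[K] F'.C} (h : ∀ m < n, ∀ x ∈ F.wt m, A x = A' x) {x : F.C} (hx : x ∈ F.wt n) :
    decomposablePart hV hV' A x = decomposablePart hV hV' A' x := by
  simp only [decomposablePart_apply, eulerInv_of_mem_wt hx, map_smul]
  rw [tmulLift_comul_congr hV hV' (fun m hm y hy => ?_) h hx]
  simp only [LinearMap.comp_apply, euler_of_mem_wt hV hy, map_smul, h m hm y hy]

theorem decomposablePart_mem_grC (hV : ⨆ i, grV i = ⊤) (hV' : ⨆ i, grV' i = ⊤) {n : ℕ}
    {A : F.C →ₗ[K] F'.C} (hA : ∀ m < n, ∀ i, ∀ x ∈ F.bigraded m i, A x ∈ F'.grC i) {i : ℤ} {x : F.C}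
    (hx : x ∈ F.bigraded n i) : decomposablePart hV hV' A x ∈ F'.grC i := by
  rw [decomposablePart_apply, eulerInv_of_mem_wt (bigraded_le_wt _ _ hx), map_smul, map_smul,
    ← add_zero i]
  refine Submodule.smul_mem _ _ (tmulLift_comul_mem_grC hV hV' (fun m hm j y hy => ?_) hA hx)
  simp only [LinearMap.comp_apply, euler_of_mem_wt hV (bigraded_le_wt _ _ hy), map_smul, add_zero]
  exact Submodule.smul_mem _ _ (xi_mem hV' (hA m hm j y hy))

theorem mem_grC_of_eq_incl_xi_add_decomposablePart (hV : ⨆ i, grV i = ⊤) (hV' : ⨆ i, grV' i = ⊤)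
    {Φ : F.C →ₗ[K] F'.C} (hΦ : ∀ x, Φ x = F'.incl (F'.xi (Φ x)) + decomposablePart hV hV' Φ x)
    (hxi : ∀ i, ∀ x ∈ F.grC i, decomposablePart hV hV' Φ x ∈ F'.grC i → F'.xi (Φ x) ∈ grV' (i + 1))
    {i : ℤ} {x : F.C} (hx : x ∈ F.grC i) : Φ x ∈ F'.grC i := by
  suffices h : ∀ n i, ∀ x ∈ F.bigraded n i, Φ x ∈ F'.grC i from
    (grC_le hV fun n x hx => h n i x hx : F.grC i ≤ (F'.grC i).comap Φ) hx
  intro n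
  induction n using Nat.strong_induction_on with
  | _ n ih =>
    intro i x hx
    have hdec := decomposablePart_mem_grC hV hV' ih hx
    rw [hΦ]
    exact add_mem (incl_mem_grC (hxi i x (bigraded_le_grC _ _ hx) hdec)) hdec

theorem comp_euler_eq_lifting (hV : ⨆ i, grV i = ⊤) (hV' : ⨆ i, grV' i = ⊤) {Φ : F.C →ₗ[K] F'.C}
    (hΦ : ∀ x, Φ x = F'.incl (F'.xi (Φ x)) + decomposablePart hV hV' Φ x) :
    Φ ∘ₗ F.euler hV = lifting hV' (F'.xi ∘ₗ Φ ∘ₗ F.euler hV) Φ := by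
  refine LinearMap.ext fun x => ?_
  rw [LinearMap.comp_apply, hΦ, decomposablePart_apply, eulerInv_euler]
  rfl

theorem isMorphism_of_eq_incl_xi_add_decomposablePart (hV : ⨆ i, grV i = ⊤)
    (hV' : ⨆ i, grV' i = ⊤) {Φ : F.C →ₗ[K] F'.C}
    (hΦ : ∀ x, Φ x = F'.incl (F'.xi (Φ x)) + decomposablePart hV hV' Φ x)
    (hdeg : ∀ i, ∀ x ∈ F.grC i, Φ x ∈ F'.grC i) : F.IsMorphism F' Φ := by
  have hq (i : ℤ) (x : F.C) (hx : x ∈ F.grC i) :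
      (F'.xi ∘ₗ Φ ∘ₗ F.euler hV) x ∈ grV' (i + 0 + 1) :=
    xi_mem hV' (hdeg _ _ ((isCoderivation_euler hV).1 i x hx))
  refine ⟨hdeg, linearMap_ext_of_iSup_eq_top F.wt_internal.submodule_iSup_eq_top fun n => ?_⟩
  induction n using Nat.strong_induction_on with
  | _ n ih =>
    intro x hx
    have hcomul : F'.comul (Φ (F.euler hV x))
        = TensorProduct.map Φ Φ (F.comul (F.euler hV x)) := by
      have hlift := comul_lifting hV hV' hq hdeg ih hx
      rw [← comp_euler_eq_lifting hV hV' hΦ, par_zero, LinearMap.comp_id] at hlift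
      rw [(isCoderivation_euler hV).comul_apply, map_add, TensorProduct.map_map,
        TensorProduct.map_map, par_zero, LinearMap.comp_id]
      exact hlift
    rw [euler_of_mem_wt hV hx] at hcomul
    simp only [map_smul] at hcomul
    exact smul_right_injective _ (Nat.cast_ne_zero.2 n.succ_ne_zero : ((n + 1 : ℕ) : K) ≠ 0) hcomul

theorem exists_isMorphism_xi_eq_sub (hV : ⨆ i, grV i = ⊤) (hV' : ⨆ i, grV' i = ⊤)
    {g : F.C →ₗ[K] V'} (hg : ∀ i, ∀ x ∈ F.grC i, g x ∈ grV' (i + 1)) {G : F'.C →ₗ[K] V'}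
    (hG : ∀ i, ∀ x ∈ F'.grC i, G x ∈ grV' (i + 1)) (hGincl : ∀ a, G (F'.incl a) = 0) :
    ∃ Φ : F.C →ₗ[K] F'.C, F.IsMorphism F' Φ ∧ ∀ x, F'.xi (Φ x) = g x - G (Φ x) := by
  obtain ⟨Φ, hfix⟩ := exists_fixedPoint_of_graded F.wt_internal
    (fun A => F'.incl ∘ₗ (g - G ∘ₗ decomposablePart hV hV' A) + decomposablePart hV hV' A)
    fun n A A' h x hx => by
      simp only [LinearMap.add_apply, LinearMap.comp_apply, LinearMap.sub_apply,
        decomposablePart_congr hV hV' h hx]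
  have hΦ (x : F.C) : Φ x = F'.incl (g x - G (decomposablePart hV hV' Φ x))
      + decomposablePart hV hV' Φ x := (LinearMap.congr_fun hfix x).symm
  have hxi (x : F.C) : F'.xi (Φ x) = g x - G (decomposablePart hV hV' Φ x) := by
    rw [hΦ, map_add, xi_incl, xi_decomposablePart, add_zero]
  have hGΦ (x : F.C) : G (Φ x) = G (decomposablePart hV hV' Φ x) := by
    rw [hΦ, map_add, hGincl, zero_add]
  have hΦxi (x : F.C) : Φ x = F'.incl (F'.xi (Φ x)) + decomposablePart hV hV' Φ x := by
    rw [hxi]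
    exact hΦ x
  refine ⟨Φ, isMorphism_of_eq_incl_xi_add_decomposablePart hV hV' hΦxi fun i x hx =>
    mem_grC_of_eq_incl_xi_add_decomposablePart hV hV' hΦxi (fun j y hy hdec => ?_) hx,
    fun x => by rw [hxi, hGΦ]⟩
  rw [hxi]
  exact sub_mem (hg j y hy) (hG j _ hdec)

end CofreeData

/-! ### Identities between coderivations -/

namespace CofreeData

theorem IsCoderivation.comul_apply_apply {F : CofreeData K V grV} {Q : F.C →ₗ[K] F.C}
    (hQ : F.IsCoderivation 1 Q) (x : F.C) :
    F.comul (Q (Q x)) = TensorProduct.map (Q ∘ₗ Q) LinearMap.id (F.comul x)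
      + TensorProduct.map (F.par 1 ∘ₗ F.par 1) (Q ∘ₗ Q) (F.comul x) := by
  have hpar : F.par 1 ∘ₗ Q = (-1 : K) • Q ∘ₗ F.par 1 := LinearMap.ext fun y => by
    rw [LinearMap.comp_apply, par_map_of_degree hQ.1, mul_one, zpow_one]
    rfl
  rw [hQ.comul_apply, hQ.comul_apply]
  simp only [map_add, TensorProduct.map_map, LinearMap.id_comp, LinearMap.comp_id, hpar,
    TensorProduct.map_smul_left, LinearMap.smul_apply]
  module

section Vanishing

variable [CharZero K] {V' : Type} [AddCommGroup V'] [Module K V'] {grV' : ℤ → Submodule K V'}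
  {F : CofreeData K V grV} {F' : CofreeData K V' grV'}

theorem comul_eq_zero_of_eq_zero_of_lt (hV : ⨆ i, grV i = ⊤) {T α β : F.C →ₗ[K] F'.C}
    (hT : ∀ x, F'.comul (T x)
      = TensorProduct.map T α (F.comul x) + TensorProduct.map β T (F.comul x))
    {n : ℕ} (h : ∀ m < n, ∀ x ∈ F.wt m, T x = 0) {x : F.C} (hx : x ∈ F.wt n) :
    F'.comul (T x) = 0 := by
  rw [hT, map_comul_congr hV (f' := 0) h (fun _ _ _ _ => rfl) hx,
    map_comul_congr hV (g' := 0) (fun _ _ _ _ => rfl) h hx, TensorProduct.map_zero_left,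
    TensorProduct.map_zero_right, LinearMap.zero_apply, add_zero]

theorem eq_zero_of_xi_eq_zero_of_comul_eq_zero (hV : ⨆ i, grV i = ⊤) (hV' : ⨆ i, grV' i = ⊤)
    {T α β : F.C →ₗ[K] F'.C}
    (hT : ∀ x, F'.comul (T x)
      = TensorProduct.map T α (F.comul x) + TensorProduct.map β T (F.comul x))
    (hxi : ∀ x, F'.comul (T x) = 0 → F'.xi (T x) = 0) : T = 0 := by
  refine linearMap_ext_of_iSup_eq_top F.wt_internal.submodule_iSup_eq_top fun n => ?_
  induction n using Nat.strong_induction_on with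
  | _ n ih =>
    intro x hx
    have hcomul := comul_eq_zero_of_eq_zero_of_lt hV hT ih hx
    exact eq_zero_of_comul_eq_zero hV' hcomul (hxi x hcomul)

theorem IsCoderivation.comp_eq_comp (hV : ⨆ i, grV i = ⊤) (hV' : ⨆ i, grV' i = ⊤) {m : ℤ}
    {Q : F'.C →ₗ[K] F'.C} {Q' : F.C →ₗ[K] F.C} {Φ : F.C →ₗ[K] F'.C} (hQ : F'.IsCoderivation m Q)
    (hQ' : F.IsCoderivation m Q') (hΦ : F.IsMorphism F' Φ)
    (hxi : ∀ x, F'.comul (Q (Φ x) - Φ (Q' x)) = 0 → F'.xi (Q (Φ x)) = F'.xi (Φ (Q' x))) :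
    Q ∘ₗ Φ = Φ ∘ₗ Q' := by
  refine sub_eq_zero.1 (eq_zero_of_xi_eq_zero_of_comul_eq_zero hV hV' (α := Φ)
    (β := Φ ∘ₗ F.par m) (fun x => ?_) fun x hx => ?_)
  · have hpar : F'.par m ∘ₗ Φ = Φ ∘ₗ F.par m := LinearMap.ext (par_map hΦ.1 m)
    rw [LinearMap.sub_apply, LinearMap.comp_apply, LinearMap.comp_apply, map_sub, hQ.comul_apply,
      hΦ.comul_apply, hΦ.comul_apply, hQ'.comul_apply, map_add]
    simp only [TensorProduct.map_map, LinearMap.id_comp, LinearMap.comp_id, hpar, sub_eq_add_neg,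
      ← neg_one_smul K (Φ ∘ₗ Q'), TensorProduct.map_add_left, TensorProduct.map_add_right,
      TensorProduct.map_smul_left, TensorProduct.map_smul_right, LinearMap.add_apply,
      LinearMap.smul_apply]
    module
  · rw [LinearMap.sub_apply, map_sub, sub_eq_zero]
    exact hxi x hx

theorem IsCoderivation.comp_self_eq_zero (hV : ⨆ i, grV i = ⊤) {Q : F.C →ₗ[K] F.C}
    (hQ : F.IsCoderivation 1 Q) (hxi : ∀ x, F.comul (Q (Q x)) = 0 → F.xi (Q (Q x)) = 0) :
    Q ∘ₗ Q = 0 :=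
  eq_zero_of_xi_eq_zero_of_comul_eq_zero hV hV hQ.comul_apply_apply hxi

end Vanishing

end CofreeData

/-! ### Transfer along a contraction -/

namespace CofreeData

/-- The linear structure map `Q₁` of a coderivation `Q`, as an endomorphism of the cogenerators. -/
def linearPart (F : CofreeData K V grV) (Q : F.C →ₗ[K] F.C) : V →ₗ[K] V :=
  F.xi ∘ₗ Q ∘ₗ F.incl

/-- The sum `Q₂ + Q₃ + ⋯` of the nonlinear structure maps of a coderivation `Q`: what remains of
its corestriction `ξ ∘ Q` after the linear part has been removed. -/
def higherPart (F : CofreeData K V grV) (Q : F.C →ₗ[K] F.C) : F.C →ₗ[K] V :=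
  F.xi ∘ₗ Q - F.linearPart Q ∘ₗ F.xi

section StructureMaps

variable {F : CofreeData K V grV} {Q : F.C →ₗ[K] F.C}

theorem higherPart_apply (x : F.C) :
    F.higherPart Q x = F.xi (Q x) - F.linearPart Q (F.xi x) :=
  rfl

theorem higherPart_incl (v : V) : F.higherPart Q (F.incl v) = 0 := by
  rw [higherPart_apply, xi_incl]
  exact sub_self _

theorem linearPart_mem (hQ : F.IsCoderivation 1 Q) (hV : ⨆ i, grV i = ⊤) {i : ℤ} {v : V}
    (hv : v ∈ grV i) : F.linearPart Q v ∈ grV (i + 1) := by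
  have hQv := xi_mem hV (hQ.1 (i - 1) _ (F.incl_mem_grC (by rwa [sub_add_cancel])))
  rwa [sub_add_cancel] at hQv

theorem higherPart_mem (hQ : F.IsCoderivation 1 Q) (hV : ⨆ i, grV i = ⊤) {i : ℤ} {x : F.C}
    (hx : x ∈ F.grC i) : F.higherPart Q x ∈ grV (i + 1 + 1) :=
  sub_mem (xi_mem hV (hQ.1 i x hx)) (linearPart_mem hQ hV (xi_mem hV hx))

variable [CharZero K]

theorem higherPart_eq_zero_of_comul_eq_zero (hV : ⨆ i, grV i = ⊤) {x : F.C}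
    (hx : F.comul x = 0) : F.higherPart Q x = 0 := by
  rw [eq_incl_of_comul_eq_zero hV hx, higherPart_incl]

theorem higherPart_congr (hV : ⨆ i, grV i = ⊤) {x y : F.C} (hxy : F.comul x = F.comul y) :
    F.higherPart Q x = F.higherPart Q y := by
  rw [← sub_eq_zero, ← map_sub]
  exact higherPart_eq_zero_of_comul_eq_zero hV (by rw [map_sub, hxy, sub_self])

theorem IsCoderivation.apply_incl {m : ℤ} (hQ : F.IsCoderivation m Q) (hV : ⨆ i, grV i = ⊤)
    (v : V) : Q (F.incl v) = F.incl (F.linearPart Q v) :=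
  eq_incl_of_comul_eq_zero hV (by rw [hQ.comul_apply, comul_incl, map_zero, map_zero, add_zero])

theorem linearPart_linearPart (hQ : F.IsCoderivation 1 Q) (hQsq : Q ∘ₗ Q = 0)
    (hV : ⨆ i, grV i = ⊤) (v : V) : F.linearPart Q (F.linearPart Q v) = 0 := by
  change F.xi (Q (F.incl (F.linearPart Q v))) = 0
  rw [← hQ.apply_incl hV]
  exact (congrArg F.xi (LinearMap.congr_fun hQsq _)).trans (map_zero _)

theorem linearPart_higherPart (hQ : F.IsCoderivation 1 Q) (hQsq : Q ∘ₗ Q = 0)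
    (hV : ⨆ i, grV i = ⊤) (x : F.C) :
    F.linearPart Q (F.higherPart Q x) = -F.higherPart Q (Q x) := by
  have hQQ : Q (Q x) = 0 := LinearMap.congr_fun hQsq x
  rw [higherPart_apply, higherPart_apply, map_sub, linearPart_linearPart hQ hQsq hV, hQQ, map_zero,
    sub_zero, zero_sub, neg_neg]

end StructureMaps

theorem word_pair {F : CofreeData K V grV} (hV : ⨆ i, grV i = ⊤) (u v : V) :
    F.word 1 ![u, v] = F.mul hV u (F.incl v) := by
  rw [incl_apply, mul_word]
  congr 1
  funext i
  fin_cases i <;> rfl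

section Words

variable [CharZero K] {F : CofreeData K V grV} {V' : Type} [AddCommGroup V'] [Module K V']
  {grV' : ℤ → Submodule K V'} {F' : CofreeData K V' grV'}

theorem IsMorphism.apply_incl {Φ : F.C →ₗ[K] F'.C} (hΦ : F.IsMorphism F' Φ)
    (hV' : ⨆ i, grV' i = ⊤) (v : V) : Φ (F.incl v) = F'.incl (F'.xi (Φ (F.incl v))) :=
  eq_incl_of_comul_eq_zero hV' (by rw [hΦ.comul_apply, comul_incl, map_zero])

theorem comul_mul_incl (hV : ⨆ i, grV i = ⊤) {e : ℤ} {u : V} (hu : u ∈ grV (e + 1)) (v : V) :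
    F.comul (F.mul hV u (F.incl v))
      = F.incl u ⊗ₜ[K] F.incl v + F.par e (F.incl v) ⊗ₜ[K] F.incl u := by
  rw [comul_mul hV hu, comul_incl, map_zero, map_zero, add_zero, add_zero]

theorem IsMorphism.comul_apply_word_pair (hV : ⨆ i, grV i = ⊤) (hV' : ⨆ i, grV' i = ⊤)
    {Φ : F.C →ₗ[K] F'.C} (hΦ : F.IsMorphism F' Φ) {f : V →ₗ[K] V'}
    (hf : ∀ i, ∀ a ∈ grV i, f a ∈ grV' i) (hΦf : ∀ a, Φ (F.incl a) = F'.incl (f a)) (a b : V) :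
    F'.comul (Φ (F.word 1 ![a, b])) = F'.comul (F'.word 1 ![f a, f b]) := by
  rw [word_pair hV, word_pair hV']
  suffices h : F'.comul ∘ₗ Φ ∘ₗ (F.mul hV).flip (F.incl b)
      = F'.comul ∘ₗ (F'.mul hV').flip (F'.incl (f b)) ∘ₗ f from LinearMap.congr_fun h a
  refine linearMap_ext_of_iSup_eq_top hV fun i u hu => ?_
  have hu' : u ∈ grV (i - 1 + 1) := by rwa [sub_add_cancel]
  change F'.comul (Φ (F.mul hV u (F.incl b))) = F'.comul (F'.mul hV' (f u) (F'.incl (f b)))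
  rw [hΦ.comul_apply, comul_mul_incl hV hu', comul_mul_incl hV' (hf _ _ hu'), map_add,
    TensorProduct.map_tmul, TensorProduct.map_tmul, ← par_map hΦ.1, hΦf, hΦf]

end Words

section Transfer

variable [CharZero K] {L H : Type} [AddCommGroup L] [Module K L] [AddCommGroup H] [Module K H]
  {grL : ℤ → Submodule K L} {grH : ℤ → Submodule K H}
  {F : CofreeData K L grL} {FH : CofreeData K H grH}
  {Q : F.C →ₗ[K] F.C} {Qt : FH.C →ₗ[K] FH.C} {Φ : FH.C →ₗ[K] F.C}
  {f : H →ₗ[K] L} {p : L →ₗ[K] H} {h : L →ₗ[K] L}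

theorem IsMorphism.apply_incl_of_xi_eq (hL : ⨆ i, grL i = ⊤) (hΦ : FH.IsMorphism F Φ)
    (hxiΦ : ∀ x, F.xi (Φ x) = f (FH.xi x) - h (F.higherPart Q (Φ x))) (a : H) :
    Φ (FH.incl a) = F.incl (f a) := by
  have hcomul : F.comul (Φ (FH.incl a)) = 0 := by rw [hΦ.comul_apply, comul_incl, map_zero]
  rw [hΦ.apply_incl hL, hxiΦ, higherPart_eq_zero_of_comul_eq_zero hL hcomul, map_zero, sub_zero,
    xi_incl]

theorem IsCoderivation.apply_incl_eq_zero (hH : ⨆ i, grH i = ⊤) (hQt : FH.IsCoderivation 1 Qt)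
    (hΦf : ∀ a, Φ (FH.incl a) = F.incl (f a))
    (hxiQt : ∀ x, FH.xi (Qt x) = p (F.higherPart Q (Φ x))) (a : H) : Qt (FH.incl a) = 0 := by
  rw [hQt.apply_incl hH]
  change FH.incl (FH.xi (Qt (FH.incl a))) = 0
  rw [hxiQt, hΦf, higherPart_incl, map_zero, map_zero]

theorem IsCoderivation.comp_eq_comp_of_contraction (hL : ⨆ i, grL i = ⊤) (hH : ⨆ i, grH i = ⊤)
    (hQ : F.IsCoderivation 1 Q) (hQsq : Q ∘ₗ Q = 0) (hQt : FH.IsCoderivation 1 Qt)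
    (hΦ : FH.IsMorphism F Φ) (hfd : ∀ a, F.linearPart Q (f a) = 0)
    (hcontr : ∀ y, F.linearPart Q (h y) + h (F.linearPart Q y) = y - f (p y))
    (hxiΦ : ∀ x, F.xi (Φ x) = f (FH.xi x) - h (F.higherPart Q (Φ x)))
    (hxiQt : ∀ x, FH.xi (Qt x) = p (F.higherPart Q (Φ x))) :
    Q ∘ₗ Φ = Φ ∘ₗ Qt := by
  refine hQ.comp_eq_comp hH hL hQt hΦ fun x hx => ?_
  have hcongr : F.higherPart Q (Φ (Qt x)) = F.higherPart Q (Q (Φ x)) :=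
    higherPart_congr hL (sub_eq_zero.1 (by rwa [← map_sub])).symm
  calc F.xi (Q (Φ x))
      = F.higherPart Q (Φ x) + F.linearPart Q (F.xi (Φ x)) := (sub_add_cancel _ _).symm
    _ = F.higherPart Q (Φ x) - F.linearPart Q (h (F.higherPart Q (Φ x))) := by
        rw [hxiΦ, map_sub, hfd, zero_sub, ← sub_eq_add_neg]
    _ = f (p (F.higherPart Q (Φ x))) + h (F.linearPart Q (F.higherPart Q (Φ x))) := by
        rw [sub_eq_iff_eq_add, add_assoc, add_comm (h _), hcontr, add_sub_cancel]
    _ = f (FH.xi (Qt x)) - h (F.higherPart Q (Φ (Qt x))) := by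
        rw [hxiQt, hcongr, linearPart_higherPart hQ hQsq hL, map_neg, ← sub_eq_add_neg]
    _ = F.xi (Φ (Qt x)) := (hxiΦ _).symm

theorem IsCoderivation.comp_self_eq_zero_of_comp_eq_comp (hH : ⨆ i, grH i = ⊤)
    (hQsq : Q ∘ₗ Q = 0) (hQt : FH.IsCoderivation 1 Qt) (hf : Function.Injective f)
    (hΦf : ∀ a, Φ (FH.incl a) = F.incl (f a)) (hQΦ : Q ∘ₗ Φ = Φ ∘ₗ Qt) : Qt ∘ₗ Qt = 0 := by
  refine hQt.comp_self_eq_zero hH fun x hx => hf ?_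
  calc f (FH.xi (Qt (Qt x))) = F.xi (Φ (Qt (Qt x))) := by
        rw [eq_incl_of_comul_eq_zero hH hx, hΦf, xi_incl, xi_incl]
    _ = F.xi ((Q ∘ₗ Q) (Φ x)) := by
        rw [← LinearMap.comp_apply Φ, ← hQΦ, LinearMap.comp_apply, ← LinearMap.comp_apply Φ, ← hQΦ]
        rfl
    _ = f 0 := by rw [hQsq, LinearMap.zero_apply, map_zero, map_zero]

theorem IsCoderivation.map_xi_word_pair (hL : ⨆ i, grL i = ⊤) (hH : ⨆ i, grH i = ⊤)
    (hQt : FH.IsCoderivation 1 Qt) (hΦ : FH.IsMorphism F Φ) (hf : ∀ i, ∀ a ∈ grH i, f a ∈ grL i)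
    (hΦf : ∀ a, Φ (FH.incl a) = F.incl (f a)) (hQt₁ : ∀ a, Qt (FH.incl a) = 0)
    (hQΦ : Q ∘ₗ Φ = Φ ∘ₗ Qt) (a b : H) :
    f (FH.xi (Qt (FH.word 1 ![a, b])))
      = F.xi (Q (F.word 1 ![f a, f b])) + F.linearPart Q (F.xi (Φ (FH.word 1 ![a, b]))) := by
  set w := FH.word 1 ![a, b]
  have hQtw : FH.comul (Qt w) = 0 := by
    refine comul_eq_zero_of_eq_zero_of_lt hH hQt.comul_apply (n := 1) (fun m hm x hx => ?_)
      (FH.word_wt 1 _)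
    obtain rfl := Nat.lt_one_iff.1 hm
    rw [← incl_xi hx, hQt₁]
  have hhigher : F.higherPart Q (Φ w) = F.xi (Q (F.word 1 ![f a, f b])) := by
    rw [higherPart_congr hL (hΦ.comul_apply_word_pair hH hL hf hΦf a b), higherPart_apply,
      F.xi_word, map_zero, sub_zero]
  calc f (FH.xi (Qt w)) = F.xi (Φ (Qt w)) := by
        rw [eq_incl_of_comul_eq_zero hH hQtw, hΦf, xi_incl, xi_incl]
    _ = F.xi (Q (Φ w)) := congrArg F.xi (LinearMap.congr_fun hQΦ w).symm
    _ = F.higherPart Q (Φ w) + F.linearPart Q (F.xi (Φ w)) := (sub_add_cancel _ _).symm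
    _ = _ := by rw [hhigher]

end Transfer

end CofreeData

/-- homotopy transfer / Lemma 4.2.1. Let `(L, Q)` be an `L∞`-algebra with
cohomology `H = H(L, Q₁)` and let `f : H → L` be a quasi-isomorphism of complexes (`H`
carrying the zero differential).  Then there is an `L∞`-structure `Q̃` on `H` with `Q̃₁ = 0`
and `Q̃₂` the bracket induced by `Q₂` on cohomology, together with an `L∞`-quasi-isomorphism
from `(H, Q̃)` to `(L, Q)` whose first structure map is `f`. -/
theorem homotopy_transfer
    (K : Type) [Field K] [CharZero K]
    (L : Type) [AddCommGroup L] [Module K L] (grL : ℤ → Submodule K L)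
    (hgrL : DirectSum.IsInternal grL)
    (F : CofreeData K L grL) (Q : F.C →ₗ[K] F.C)
    (hQ : F.IsCoderivation 1 Q) (hQsq : Q ∘ₗ Q = 0)
    (H : Type) [AddCommGroup H] [Module K H] (grH : ℤ → Submodule K H)
    (hgrH : DirectSum.IsInternal grH)
    (FH : CofreeData K H grH)
    (f : H →ₗ[K] L)
    (hfdeg : ∀ i : ℤ, ∀ a ∈ grH i, f a ∈ grL i)
    -- f is a chain map from (H,0) to (L,Q₁):
    (hfchain : ∀ a : H, F.xi (Q (F.word 0 (fun _ => f a))) = 0)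
    -- f induces an isomorphism H → H(L,Q₁):
    (hfinj : ∀ a : H, (∃ u : L, f a = F.xi (Q (F.word 0 (fun _ => u)))) → a = 0)
    (hfsurj : ∀ y : L, F.xi (Q (F.word 0 (fun _ => y))) = 0 →
      ∃ (a : H) (u : L), y = f a + F.xi (Q (F.word 0 (fun _ => u)))) :
    ∃ Qt : FH.C →ₗ[K] FH.C,
      FH.IsCoderivation 1 Qt ∧ Qt ∘ₗ Qt = 0 ∧
      -- Q̃₁ = 0:
      (∀ a : H, FH.xi (Qt (FH.word 0 (fun _ => a))) = 0) ∧
      -- Q̃₂ is the bracket induced by Q₂ on cohomology: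
      (∀ a b : H, ∃ u : L,
        f (FH.xi (Qt (FH.word 1 ![a, b])))
          = F.xi (Q (F.word 1 ![f a, f b])) + F.xi (Q (F.word 0 (fun _ => u)))) ∧
      -- and there is an L∞-morphism F with F₁ = f (hence a quasi-isomorphism):
      (∃ Φ : FH.C →ₗ[K] F.C, FH.IsMorphism F Φ ∧ Q ∘ₗ Φ = Φ ∘ₗ Qt ∧
        ∀ a : H, FH.structMap F Φ 0 (fun _ => a) = f a) := by
  have hL := hgrL.submodule_iSup_eq_top
  have hH := hgrH.submodule_iSup_eq_top
  obtain ⟨p, h, hp, hh, hcontr⟩ := exists_graded_contraction hgrL hgrH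
    (fun _ _ => CofreeData.linearPart_mem hQ hL) hfdeg
    (CofreeData.linearPart_linearPart hQ hQsq hL) hfchain hfinj hfsurj
  obtain ⟨Φ, hΦ, hxiΦ⟩ := CofreeData.exists_isMorphism_xi_eq_sub hH hL
    (g := f ∘ₗ FH.xi) (G := h ∘ₗ F.higherPart Q)
    (fun _ _ hx => hfdeg _ _ (CofreeData.xi_mem hH hx))
    (fun _ _ hx => hh _ _ (CofreeData.higherPart_mem hQ hL hx))
    (fun _ => (congrArg h (CofreeData.higherPart_incl _)).trans (map_zero h))
  have hΦf := hΦ.apply_incl_of_xi_eq hL hxiΦ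
  let Qt : FH.C →ₗ[K] FH.C := CofreeData.lifting hH (p ∘ₗ F.higherPart Q ∘ₗ Φ) LinearMap.id
  have hQt : FH.IsCoderivation 1 Qt := CofreeData.isCoderivation_lifting hH fun _ _ hx =>
    hp _ _ (CofreeData.higherPart_mem hQ hL (hΦ.1 _ _ hx))
  have hxiQt : ∀ x, FH.xi (Qt x) = p (F.higherPart Q (Φ x)) := CofreeData.xi_lifting hH _ _
  have hQΦ := hQ.comp_eq_comp_of_contraction hL hH hQsq hQt hΦ hfchain hcontr hxiΦ hxiQt
  have hQt₁ := hQt.apply_incl_eq_zero hH hΦf hxiQt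
  have hf : Function.Injective f := (injective_iff_map_eq_zero f).2 fun a ha =>
    hfinj a ⟨0, ha.trans (map_zero (F.linearPart Q)).symm⟩
  exact ⟨Qt, hQt, hQt.comp_self_eq_zero_of_comp_eq_comp hH hQsq hf hΦf hQΦ,
    fun a => (congrArg FH.xi (hQt₁ a)).trans (map_zero _),
    fun a b => ⟨_, hQt.map_xi_word_pair hL hH hΦ hfdeg hΦf hQt₁ hQΦ a b⟩,
    Φ, hΦ, hQΦ, fun a => (congrArg F.xi (hΦf a)).trans (F.xi_incl _)⟩

end
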